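/- Let 1 ≤ l < k ≤ n be integers and τ = n − k + l. Then there is C = C(n, k, l) such that for every f ∈ W^{k,1}(ℝⁿ), ∫₀^∞ H^τ_∞({x ∈ ℝⁿ : M(∇^l f)(x) ≥ t}) dt ≤ C ‖∇^k f‖_{L¹(ℝⁿ)}. -/

import Mathlib

open MeasureTheory Metric Set
open scoped ENNReal NNReal

/-- `τ`-dimensional Hausdorff content. -/
noncomputable def hContent {X : Type*} [EMetricSpace X] (τ : ℝ) (S : Set X) : ℝ≥0∞ :=
  ⨅ (c : ℕ → Set X) (_ : S ⊆ ⋃ i, c i), ∑' i, EMetric.diam (c i) ^ τ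

/-- The Hardy–Littlewood maximal function. -/
noncomputable def maxFn {n : ℕ} (f : EuclideanSpace ℝ (Fin n) → ℝ≥0∞)
    (x : EuclideanSpace ℝ (Fin n)) : ℝ≥0∞ :=
  ⨆ (r : ℝ) (_ : 0 < r), (∫⁻ y in Metric.ball x r, f y) / volume (Metric.ball x r)

/-!
A function has small `d`-dimensional Choquet integral as soon as it lies below a superposition
`∑ c_Q 1_Q` of dyadic cubes with `∑ c_Q ℓ(Q)^d` small: charging each level `t` at each point to the
cube where the partial sum, from large cubes to small, first exceeds `t` covers the superlevel sets.
Unlike the Choquet integral, such majorants may be added, so an operator bound reduces to one cube.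

* For `g` integrable on `ℝⁿ`, the open set `{g > s}` is covered by disjoint dyadic cubes that are
  partly but at most half full. By the relative isoperimetric inequality `ℓ(Q)^(n-1)` is at most a
  multiple of the perimeter of `{g > s}` in `Q` (Gustin's boxing inequality), and the coarea
  inequality, applied at one well-chosen level per dyadic shell, gives `|g|` a majorant of
  `(n-1)`-dimensional mass at most a multiple of `‖∇g‖₁`.
* Telescoping averages over the dyadic cubes around a point and Poincaré's inequality bound `|u|`
  by the dyadic Riesz potential of `|∇u|`. This potential lowers by one the dimension in which mass
  is measured, so starting from `∇^(k-1) f` one descends to `∇^l f` in dimension `n - k + l`.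
* The maximal function of the indicator of a cube `Q` is at most a multiple of `∑ i, 2^(-n i)` times
  the indicators of the neighbors of the `i`-th ancestor of `Q`, hence has `d`-dimensional mass at
  most a multiple of `ℓ(Q)^d` for `d < n`.
-/

/-- The side length `2 ^ j` of the dyadic cubes of scale `j`. -/
noncomputable def dyadicLength (j : ℤ) : ℝ≥0∞ := 2 ^ j

section DyadicLength

variable (i j : ℤ)

lemma dyadicLength_ne_zero : dyadicLength j ≠ 0 :=
  (ENNReal.zpow_pos two_ne_zero ENNReal.ofNat_ne_top j).ne'

lemma dyadicLength_ne_top : dyadicLength j ≠ ⊤ :=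
  ENNReal.zpow_ne_top two_ne_zero ENNReal.ofNat_ne_top j

lemma dyadicLength_zero : dyadicLength 0 = 1 := zpow_zero _

lemma dyadicLength_natCast (i : ℕ) : dyadicLength i = 2 ^ i := zpow_natCast _ _

lemma dyadicLength_add : dyadicLength (i + j) = dyadicLength i * dyadicLength j :=
  ENNReal.zpow_add two_ne_zero ENNReal.ofNat_ne_top i j

lemma dyadicLength_neg : dyadicLength (-j) = (dyadicLength j)⁻¹ := ENNReal.zpow_neg _ _

lemma dyadicLength_monotone : Monotone dyadicLength :=
  fun _ _ h => ENNReal.zpow_le_of_le one_le_two h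

lemma dyadicLength_eq_ofReal : dyadicLength j = ENNReal.ofReal (2 ^ j) := by
  have h : (2 : ℝ) ^ j = ((2 ^ j : ℝ≥0) : ℝ) := by push_cast; rfl
  rw [h, ENNReal.ofReal_coe_nnreal, ENNReal.coe_zpow two_ne_zero]
  rfl

lemma dyadicLength_pow (d : ℕ) : dyadicLength j ^ d = dyadicLength (j * d) := by
  rw [dyadicLength_eq_ofReal, dyadicLength_eq_ofReal, ← ENNReal.ofReal_pow (by positivity),
    zpow_mul, zpow_natCast]

lemma dyadicLength_pow_ne_zero (d : ℕ) : dyadicLength j ^ d ≠ 0 :=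
  pow_ne_zero d (dyadicLength_ne_zero j)

lemma dyadicLength_pow_ne_top (d : ℕ) : dyadicLength j ^ d ≠ ⊤ :=
  ENNReal.pow_ne_top (dyadicLength_ne_top j)

lemma inv_dyadicLength_pow_mul_cancel (d : ℕ) :
    (dyadicLength j ^ d)⁻¹ * dyadicLength j ^ d = 1 :=
  ENNReal.inv_mul_cancel (dyadicLength_pow_ne_zero j d) (dyadicLength_pow_ne_top j d)

lemma dyadicLength_add_one : dyadicLength (j + 1) = 2 * dyadicLength j := by
  rw [dyadicLength_add, mul_comm, dyadicLength, zpow_one]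

lemma dyadicLength_add_one_pow (d : ℕ) :
    dyadicLength (j + 1) ^ d = 2 ^ d * dyadicLength j ^ d := by
  rw [dyadicLength_add_one, mul_pow]

lemma tsum_dyadicLength_neg : ∑' i : ℕ, dyadicLength (-(i : ℤ)) = 2 := by
  simp only [dyadicLength_neg, dyadicLength_natCast, ENNReal.inv_pow]
  rw [ENNReal.tsum_geometric, ENNReal.one_sub_inv_two, inv_inv]

end DyadicLength

/-- A half-open dyadic cube in `ℝⁿ`, encoded by its scale `j` and its corner `a`; the cube itself is
`∏ i, [a i * 2 ^ j, (a i + 1) * 2 ^ j)`, see `DyadicCube.toSet`. -/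
@[ext]
structure DyadicCube (n : ℕ) where
  /-- The binary logarithm of the side length. -/
  scale : ℤ
  /-- The least vertex, in units of the side length. -/
  corner : Fin n → ℤ

namespace DyadicCube

variable {n : ℕ}

/-- Dyadic cubes as pairs of a scale and a corner. -/
def equivProd (n : ℕ) : DyadicCube n ≃ ℤ × (Fin n → ℤ) where
  toFun Q := (Q.scale, Q.corner)
  invFun p := ⟨p.1, p.2⟩

instance : Countable (DyadicCube n) := (equivProd n).countable_iff.2 inferInstance

/-- The dyadic cube of scale `j` containing `x`. -/
noncomputable def containing (j : ℤ) (x : EuclideanSpace ℝ (Fin n)) : DyadicCube n :=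
  ⟨j, fun i => ⌊x i / 2 ^ j⌋⟩

/-- The set of points of a dyadic cube, encoded through `DyadicCube.containing` so that the cubes of
one scale partition `ℝⁿ` by definition. -/
def toSet (Q : DyadicCube n) : Set (EuclideanSpace ℝ (Fin n)) := {x | containing Q.scale x = Q}

/-- The dyadic cube containing `Q` whose scale is larger by `i`. -/
def ancestor (i : ℕ) (Q : DyadicCube n) : DyadicCube n :=
  ⟨Q.scale + i, fun m => Q.corner m / 2 ^ i⟩

lemma containing_add (j : ℤ) (i : ℕ) (x : EuclideanSpace ℝ (Fin n)) :
    containing (j + i) x = ancestor i (containing j x) := by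
  refine DyadicCube.ext rfl (funext fun m => ?_)
  have h := Int.floor_div_natCast (x m / (2 : ℝ) ^ j) (2 ^ i)
  push_cast at h
  simp only [containing, ancestor]
  rw [← h, div_div, zpow_add₀ two_ne_zero, zpow_natCast]

lemma mem_toSet_containing (j : ℤ) (x : EuclideanSpace ℝ (Fin n)) : x ∈ (containing j x).toSet :=
  rfl

lemma containing_eq_of_mem {Q : DyadicCube n} {x : EuclideanSpace ℝ (Fin n)} (hx : x ∈ Q.toSet) :
    containing Q.scale x = Q := hx

lemma subset_ancestor (i : ℕ) (Q : DyadicCube n) : Q.toSet ⊆ (Q.ancestor i).toSet := fun x hx =>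
  show containing (Q.scale + i) x = ancestor i Q by rw [containing_add, containing_eq_of_mem hx]

lemma monotone_toSet_containing (x : EuclideanSpace ℝ (Fin n)) :
    Monotone fun j => (containing j x).toSet := fun i j h => by
  obtain ⟨m, rfl⟩ := Int.le.dest h
  simpa only [containing_add] using subset_ancestor m (containing i x)

lemma mem_toSet_iff {Q : DyadicCube n} {x : EuclideanSpace ℝ (Fin n)} :
    x ∈ Q.toSet ↔
      ∀ i, Q.corner i * (2 : ℝ) ^ Q.scale ≤ x i ∧ x i < (Q.corner i + 1) * (2 : ℝ) ^ Q.scale := by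
  have h : (0 : ℝ) < 2 ^ Q.scale := by positivity
  simp only [toSet, containing, mem_ofPred_eq, DyadicCube.ext_iff, true_and, funext_iff,
    Int.floor_eq_iff, le_div_iff₀ h, div_lt_iff₀ h]

lemma toSet_eq_preimage_pi (Q : DyadicCube n) :
    Q.toSet = (WithLp.ofLp : EuclideanSpace ℝ (Fin n) → Fin n → ℝ) ⁻¹' univ.pi fun i =>
      Ico (Q.corner i * (2 : ℝ) ^ Q.scale) ((Q.corner i + 1) * (2 : ℝ) ^ Q.scale) := by
  ext x
  simp [mem_toSet_iff]

lemma measurableSet_toSet (Q : DyadicCube n) : MeasurableSet Q.toSet := by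
  rw [toSet_eq_preimage_pi]
  exact (PiLp.volume_preserving_ofLp (Fin n)).measurable
    (MeasurableSet.univ_pi fun _ => measurableSet_Ico)

lemma volume_toSet (Q : DyadicCube n) : volume Q.toSet = dyadicLength Q.scale ^ n := by
  rw [toSet_eq_preimage_pi, (PiLp.volume_preserving_ofLp (Fin n)).measure_preimage
    (MeasurableSet.univ_pi fun _ => measurableSet_Ico).nullMeasurableSet, Real.volume_pi_Ico]
  simp [add_mul, dyadicLength_eq_ofReal]

lemma volume_toSet_ne_zero (Q : DyadicCube n) : volume Q.toSet ≠ 0 :=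
  Q.volume_toSet ▸ dyadicLength_pow_ne_zero _ n

lemma volume_toSet_ne_top (Q : DyadicCube n) : volume Q.toSet ≠ ⊤ :=
  Q.volume_toSet ▸ dyadicLength_pow_ne_top _ n

lemma convex_toSet (Q : DyadicCube n) : Convex ℝ Q.toSet := by
  rw [toSet_eq_preimage_pi]
  exact (convex_pi fun _ _ => convex_Ico _ _).is_linear_preimage ⟨fun _ _ => rfl, fun _ _ => rfl⟩

end DyadicCube

lemma norm_le_card_mul_of_abs_apply_le {ι : Type*} [Fintype ι] {x : EuclideanSpace ℝ ι} {b : ℝ}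
    (h : ∀ i, |x i| ≤ b) : ‖x‖ ≤ Fintype.card ι * b := by
  calc ‖x‖ ≤ ∑ i, ‖x i‖ := by
        rw [EuclideanSpace.norm_eq]
        exact Real.sqrt_le_iff.2 ⟨by positivity,
          Finset.sum_sq_le_sq_sum_of_nonneg fun i _ => norm_nonneg _⟩
    _ ≤ ∑ _ : ι, b := Finset.sum_le_sum fun i _ => h i
    _ = Fintype.card ι * b := by simp

namespace DyadicCube

variable {n : ℕ}

lemma edist_le_of_mem {Q : DyadicCube n} {x y : EuclideanSpace ℝ (Fin n)} (hx : x ∈ Q.toSet)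
    (hy : y ∈ Q.toSet) : edist x y ≤ n * dyadicLength Q.scale := by
  have h : ‖x - y‖ ≤ n * 2 ^ Q.scale := by
    simpa using norm_le_card_mul_of_abs_apply_le (x := x - y) (b := 2 ^ Q.scale) fun i => by
      have hxi := mem_toSet_iff.1 hx i
      have hyi := mem_toSet_iff.1 hy i
      simp only [PiLp.sub_apply, abs_le]
      constructor <;> linarith
  rw [edist_dist, dist_eq_norm, dyadicLength_eq_ofReal, ← ENNReal.ofReal_natCast,
    ← ENNReal.ofReal_mul n.cast_nonneg]
  exact ENNReal.ofReal_le_ofReal h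

lemma ediam_toSet_le (Q : DyadicCube n) : ediam Q.toSet ≤ n * dyadicLength Q.scale :=
  ediam_le fun _ hx _ hy => edist_le_of_mem hx hy

lemma isBounded_toSet (Q : DyadicCube n) : Bornology.IsBounded Q.toSet :=
  isBounded_iff_ediam_ne_top.2 (ne_top_of_le_ne_top
    (ENNReal.mul_ne_top (ENNReal.natCast_ne_top n) (dyadicLength_ne_top _)) Q.ediam_toSet_le)

end DyadicCube

section Superposition

variable {n : ℕ}

/-- The superposition `∑ Q, c Q • 1_Q` of indicators of dyadic cubes, encoded as a sum over scales
since each point lies in exactly one cube of each scale. -/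
noncomputable def superposition (c : DyadicCube n → ℝ≥0∞) (x : EuclideanSpace ℝ (Fin n)) : ℝ≥0∞ :=
  ∑' j : ℤ, c (DyadicCube.containing j x)

/-- The `d`-dimensional mass `∑ Q, c Q * ℓ(Q) ^ d` of a family of coefficients. -/
noncomputable def dyadicMass (d : ℕ) (c : DyadicCube n → ℝ≥0∞) : ℝ≥0∞ :=
  ∑' Q, c Q * dyadicLength Q.scale ^ d

/-- `h` is dominated pointwise by a superposition of dyadic cubes of `d`-dimensional mass at most
`A`. This is a dyadic substitute for the statement that the Choquet integral of `h` with respect to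
`d`-dimensional Hausdorff content is at most `A`, and it is stable under countable sums. -/
def HasDyadicMajorant (d : ℕ) (h : EuclideanSpace ℝ (Fin n) → ℝ≥0∞) (A : ℝ≥0∞) : Prop :=
  ∃ c : DyadicCube n → ℝ≥0∞, (∀ x, h x ≤ superposition c x) ∧ dyadicMass d c ≤ A

lemma superposition_eq_tsum (c : DyadicCube n → ℝ≥0∞) (x : EuclideanSpace ℝ (Fin n)) :
    superposition c x = ∑' Q, c Q * Q.toSet.indicator 1 x := by
  rw [← (DyadicCube.equivProd n).symm.tsum_eq, ENNReal.tsum_prod', superposition]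
  congr 1 with j
  change _ = ∑' a, c ⟨j, a⟩ * (DyadicCube.toSet ⟨j, a⟩).indicator 1 x
  rw [tsum_eq_single (DyadicCube.containing j x).corner]
  · exact (by simp [DyadicCube.mem_toSet_containing] :
      c (.containing j x) = c (.containing j x) * (DyadicCube.containing j x).toSet.indicator 1 x)
  · intro a ha
    have hx : x ∉ DyadicCube.toSet ⟨j, a⟩ := fun hx =>
      ha (congrArg DyadicCube.corner (DyadicCube.containing_eq_of_mem hx)).symm
    simp [hx]

lemma setLIntegral_superposition (c : DyadicCube n → ℝ≥0∞) (s : Set (EuclideanSpace ℝ (Fin n))) :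
    ∫⁻ x in s, superposition c x = ∑' Q, c Q * ∫⁻ x in s, Q.toSet.indicator 1 x := by
  have hmeas (Q : DyadicCube n) :
      Measurable (Q.toSet.indicator (1 : EuclideanSpace ℝ (Fin n) → ℝ≥0∞)) :=
    measurable_one.indicator Q.measurableSet_toSet
  simp only [superposition_eq_tsum]
  rw [lintegral_tsum fun Q => ((hmeas Q).const_mul _).aemeasurable]
  simp only [lintegral_const_mul _ (hmeas _)]

namespace HasDyadicMajorant

variable {d : ℕ} {h h' : EuclideanSpace ℝ (Fin n) → ℝ≥0∞} {A A' : ℝ≥0∞}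

lemma mono (H : HasDyadicMajorant d h A) (hh : ∀ x, h' x ≤ h x) (hA : A ≤ A') :
    HasDyadicMajorant d h' A' := by
  obtain ⟨c, hc, hcA⟩ := H
  exact ⟨c, fun x => (hh x).trans (hc x), hcA.trans hA⟩

lemma tsum {ι : Type*} {h : ι → EuclideanSpace ℝ (Fin n) → ℝ≥0∞} {A : ι → ℝ≥0∞}
    (H : ∀ i, HasDyadicMajorant d (h i) (A i)) :
    HasDyadicMajorant d (fun x => ∑' i, h i x) (∑' i, A i) := by
  choose c hc hA using H
  refine ⟨fun Q => ∑' i, c i Q, fun x => ?_, ?_⟩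
  · calc ∑' i, h i x ≤ ∑' i, superposition (c i) x := ENNReal.tsum_le_tsum fun i => hc i x
      _ = superposition (fun Q => ∑' i, c i Q) x := ENNReal.tsum_comm
  · calc dyadicMass d (fun Q => ∑' i, c i Q) = ∑' i, dyadicMass d (c i) := by
          simp only [dyadicMass, ← ENNReal.tsum_mul_right]
          exact ENNReal.tsum_comm
      _ ≤ ∑' i, A i := ENNReal.tsum_le_tsum hA

lemma sum {ι : Type*} [Fintype ι] {h : ι → EuclideanSpace ℝ (Fin n) → ℝ≥0∞} {A : ι → ℝ≥0∞}
    (H : ∀ i, HasDyadicMajorant d (h i) (A i)) :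
    HasDyadicMajorant d (fun x => ∑ i, h i x) (∑ i, A i) := by
  simpa only [tsum_fintype] using tsum H

lemma add (H : HasDyadicMajorant d h A) (H' : HasDyadicMajorant d h' A') :
    HasDyadicMajorant d (fun x => h x + h' x) (A + A') := by
  simpa using sum (h := ![h, h']) (A := ![A, A'])
    (Fin.forall_fin_two.2 ⟨by simpa using H, by simpa using H'⟩)

lemma const_mul (a : ℝ≥0∞) (H : HasDyadicMajorant d h A) :
    HasDyadicMajorant d (fun x => a * h x) (a * A) := by
  obtain ⟨c, hc, hA⟩ := H
  refine ⟨fun Q => a * c Q, fun x => ?_, ?_⟩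
  · rw [superposition, ENNReal.tsum_mul_left]
    exact mul_le_mul_right (hc x) a
  · simp only [dyadicMass, mul_assoc, ENNReal.tsum_mul_left]
    exact mul_le_mul_right hA a

lemma indicator_toSet (d : ℕ) (Q : DyadicCube n) :
    HasDyadicMajorant d (Q.toSet.indicator 1) (dyadicLength Q.scale ^ d) := by
  classical
  refine ⟨Pi.single Q 1, fun x => ?_, ?_⟩
  · rw [superposition_eq_tsum]
    exact le_of_eq_of_le (by simp) (ENNReal.le_tsum Q)
  · rw [dyadicMass, tsum_eq_single Q fun R hR => by simp [hR]]
    simp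

/-- It suffices to bound a monotone, countably sublinear operator on indicators of cubes. -/
lemma transfer {d' : ℕ} {B : ℝ≥0∞}
    {T : (EuclideanSpace ℝ (Fin n) → ℝ≥0∞) → EuclideanSpace ℝ (Fin n) → ℝ≥0∞} (hT : Monotone T)
    (hT_superposition : ∀ c x, T (superposition c) x ≤ ∑' Q, c Q * T (Q.toSet.indicator 1) x)
    (hT_indicator : ∀ Q : DyadicCube n,
      HasDyadicMajorant d' (T (Q.toSet.indicator 1)) (B * dyadicLength Q.scale ^ d))
    (H : HasDyadicMajorant d h A) : HasDyadicMajorant d' (T h) (B * A) := by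
  obtain ⟨c, hc, hcA⟩ := H
  refine (tsum fun Q => (hT_indicator Q).const_mul (c Q)).mono
    (fun x => (hT hc x).trans (hT_superposition c x)) ?_
  calc ∑' Q, c Q * (B * dyadicLength Q.scale ^ d) = B * dyadicMass d c := by
        rw [dyadicMass, ← ENNReal.tsum_mul_left]
        simp only [mul_left_comm]
    _ ≤ B * A := by gcongr

end HasDyadicMajorant

end Superposition

section Choquet

open Filter Topology

lemma hContent_mono {X : Type*} [EMetricSpace X] (τ : ℝ) {S T : Set X} (hST : S ⊆ T) :
    hContent τ S ≤ hContent τ T :=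
  le_iInf₂ fun c hc => iInf₂_le c (hST.trans hc)

lemma hContent_le_tsum {X ι : Type*} [EMetricSpace X] [Countable ι] {τ : ℝ} (hτ : 0 < τ)
    {S : Set X} {s : ι → Set X} (hS : S ⊆ ⋃ i, s i) : hContent τ S ≤ ∑' i, ediam (s i) ^ τ := by
  have := Encodable.ofCountable ι
  rw [← Encodable.iUnion_decode₂] at hS
  calc hContent τ S ≤ ∑' k, ediam (⋃ b ∈ Encodable.decode₂ ι k, s b) ^ τ :=
        iInf₂_le (fun k => ⋃ b ∈ Encodable.decode₂ ι k, s b) hS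
    _ = ∑' i, ediam (s i) ^ τ :=
        tsum_iUnion_decode₂ (fun t => ediam t ^ τ) (by simp [ENNReal.zero_rpow_of_pos hτ]) s

lemma volume_Ioi_inter_ofReal_preimage_Ico_le (a b : ℝ≥0∞) :
    volume (Ioi 0 ∩ ENNReal.ofReal ⁻¹' Ico a (a + b)) ≤ b := by
  obtain rfl | hb := eq_or_ne b ⊤
  · exact le_top
  obtain rfl | ha := eq_or_ne a ⊤
  · simp
  have hsub : Ioi 0 ∩ ENNReal.ofReal ⁻¹' Ico a (a + b) ⊆ Ico a.toReal (a.toReal + b.toReal) := by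
    rintro t ⟨ht, hat, htb⟩
    refine ⟨ENNReal.toReal_le_of_le_ofReal (mem_Ioi.1 ht).le hat, ?_⟩
    rw [← ENNReal.toReal_add ha hb]
    exact (ENNReal.ofReal_lt_iff_lt_toReal (mem_Ioi.1 ht).le (by simp [ha, hb])).1 htb
  calc volume (Ioi 0 ∩ ENNReal.ofReal ⁻¹' Ico a (a + b))
      ≤ volume (Ico a.toReal (a.toReal + b.toReal)) := measure_mono hsub
    _ = b := by rw [Real.volume_Ico, add_sub_cancel_left, ENNReal.ofReal_toReal hb]

lemma tsum_intCast_add_eq_tsum_indicator_Ici (a : ℤ → ℝ≥0∞) (j : ℤ) :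
    ∑' i : ℕ, a (j + i) = ∑' m, (Ici j).indicator a m := by
  have hinj : Function.Injective fun i : ℕ => j + (i : ℤ) := fun _ _ h => by simpa using h
  rw [← hinj.tsum_eq (f := (Ici j).indicator a)]
  · simp
  · intro m hm
    have hjm : j ≤ m := mem_of_indicator_ne_zero (s := Ici j) hm
    exact ⟨(m - j).toNat, by simp [hjm]⟩

lemma exists_tail_le_lt_tail {a : ℤ → ℝ≥0∞} {r : ℝ≥0∞} (ha : ∑' i : ℕ, a i ≠ ⊤) (hr : r ≠ 0)
    (hra : r < ∑' j, a j) : ∃ j : ℤ, ∑' i : ℕ, a (j + 1 + i) ≤ r ∧ r < ∑' i : ℕ, a (j + i) := by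
  have hex : ∃ j : ℤ, r < ∑' i : ℕ, a (j + i) := by
    obtain ⟨s, hs⟩ := lt_iSup_iff.1 (ENNReal.tsum_eq_iSup_sum (f := a) ▸ hra)
    obtain ⟨j, hj⟩ := s.bddBelow
    refine ⟨j, hs.trans_le ?_⟩
    rw [tsum_intCast_add_eq_tsum_indicator_Ici]
    calc ∑ m ∈ s, a m = ∑ m ∈ s, (Ici j).indicator a m :=
          Finset.sum_congr rfl fun m hm => (indicator_of_mem (mem_Ici.2 (hj hm)) a).symm
      _ ≤ _ := ENNReal.sum_le_tsum s
  have hbdd : ∃ b : ℤ, ∀ j : ℤ, r < ∑' i : ℕ, a (j + i) → j ≤ b := by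
    obtain ⟨b, hb⟩ := ((ENNReal.tendsto_sum_nat_add (fun i : ℕ => a i) ha).eventually_lt_const
      (pos_iff_ne_zero.2 hr)).exists
    refine ⟨b, fun j hj => not_lt.1 fun hbj => hj.not_ge ?_⟩
    refine le_trans ?_ hb.le
    simp only [Nat.cast_add, add_comm _ (b : ℤ), tsum_intCast_add_eq_tsum_indicator_Ici]
    exact ENNReal.tsum_le_tsum fun m =>
      indicator_le_indicator_of_subset (Ici_subset_Ici.2 hbj.le) (fun _ => zero_le) m
  obtain ⟨j, hj, hmax⟩ := Int.exists_greatest_of_bdd hbdd hex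
  exact ⟨j, not_lt.1 fun h => absurd (hmax _ h) (by lia), hj⟩

variable {n : ℕ}

/-- The sum of the coefficients of the strict ancestors of `Q`. -/
noncomputable def ancestorSum (c : DyadicCube n → ℝ≥0∞) (Q : DyadicCube n) : ℝ≥0∞ :=
  ∑' i : ℕ, c (Q.ancestor (i + 1))

lemma ancestorSum_containing (c : DyadicCube n → ℝ≥0∞) (j : ℤ) (x : EuclideanSpace ℝ (Fin n)) :
    ancestorSum c (.containing j x) = ∑' i : ℕ, c (.containing (j + 1 + i) x) := by
  simp only [ancestorSum, ← DyadicCube.containing_add]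
  congr! 4 with i
  push_cast
  ring

/-- The levels `t` assigned to the cube `Q`: summing the coefficients of the cubes around a point of
`Q` from large to small scales, `Q` is the cube at which the sum first exceeds `t`. -/
def levels (c : DyadicCube n → ℝ≥0∞) (Q : DyadicCube n) : Set ℝ :=
  Ioi 0 ∩ ENNReal.ofReal ⁻¹' Ico (ancestorSum c Q) (ancestorSum c Q + c Q)

lemma measurableSet_levels (c : DyadicCube n → ℝ≥0∞) (Q : DyadicCube n) :
    MeasurableSet (levels c Q) :=
  measurableSet_Ioi.inter (ENNReal.measurable_ofReal measurableSet_Ico)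

lemma tsum_natCast_containing_le_dyadicMass (d : ℕ) (c : DyadicCube n → ℝ≥0∞)
    (x : EuclideanSpace ℝ (Fin n)) : ∑' i : ℕ, c (.containing i x) ≤ dyadicMass d c := by
  have hinj : Function.Injective fun i : ℕ => DyadicCube.containing i x := fun i j h => by
    simpa [DyadicCube.containing] using congrArg DyadicCube.scale h
  refine le_trans (ENNReal.tsum_le_tsum fun i => ?_)
    (ENNReal.tsum_comp_le_tsum_of_injective hinj fun Q => c Q * dyadicLength Q.scale ^ d)
  refine le_mul_of_one_le_right' (one_le_pow₀ ?_)
  rw [← dyadicLength_zero]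
  exact dyadicLength_monotone i.cast_nonneg

lemma exists_mem_levels {d : ℕ} {c : DyadicCube n → ℝ≥0∞} (hc : dyadicMass d c ≠ ⊤)
    {x : EuclideanSpace ℝ (Fin n)} {t : ℝ} (ht : 0 < t)
    (htx : ENNReal.ofReal t < superposition c x) : ∃ j : ℤ, t ∈ levels c (.containing j x) := by
  obtain ⟨j, hle, hlt⟩ := exists_tail_le_lt_tail
    (ne_top_of_le_ne_top hc (tsum_natCast_containing_le_dyadicMass d c x))
    (ENNReal.ofReal_pos.2 ht).ne' htx
  have hsplit : ∑' i : ℕ, c (.containing (j + i) x) =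
      ancestorSum c (.containing j x) + c (.containing j x) := by
    rw [tsum_eq_zero_add' ENNReal.summable, ancestorSum_containing, add_comm]
    simp [add_assoc, add_comm (1 : ℤ)]
  exact ⟨j, ht, by rwa [ancestorSum_containing], by rwa [← hsplit]⟩

lemma hContent_lt_superposition_le {d : ℕ} (hd : 0 < d) {c : DyadicCube n → ℝ≥0∞}
    (hc : dyadicMass d c ≠ ⊤) {t : ℝ} (ht : 0 < t) :
    hContent d {x | ENNReal.ofReal t < superposition c x} ≤
      ∑' Q, (levels c Q).indicator (fun _ => (n * dyadicLength Q.scale) ^ d) t := by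
  classical
  have hd0 : (0 : ℝ) < d := by exact_mod_cast hd
  have hcover : {x | ENNReal.ofReal t < superposition c x} ⊆
      ⋃ Q : DyadicCube n, if t ∈ levels c Q then Q.toSet else ∅ := fun x hx => by
    obtain ⟨j, hj⟩ := exists_mem_levels hc ht hx
    exact mem_iUnion.2 ⟨.containing j x, by
      simpa only [if_pos hj] using DyadicCube.mem_toSet_containing j x⟩
  refine (hContent_le_tsum hd0 hcover).trans (ENNReal.tsum_le_tsum fun Q => ?_)
  by_cases hQ : t ∈ levels c Q
  · simp only [if_pos hQ, indicator_of_mem hQ, ENNReal.rpow_natCast]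
    gcongr
    exact Q.ediam_toSet_le
  · simp [if_neg hQ, hd.ne']

lemma lintegral_hContent_lt_superposition_le {d : ℕ} (hd : 0 < d) {c : DyadicCube n → ℝ≥0∞}
    (hc : dyadicMass d c ≠ ⊤) :
    ∫⁻ t in Ioi (0 : ℝ), hContent d {x | ENNReal.ofReal t < superposition c x} ≤
      n ^ d * dyadicMass d c := by
  calc ∫⁻ t in Ioi (0 : ℝ), hContent d {x | ENNReal.ofReal t < superposition c x}
      ≤ ∫⁻ t in Ioi 0,
          ∑' Q, (levels c Q).indicator (fun _ => (n * dyadicLength Q.scale) ^ d) t :=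
        setLIntegral_mono' measurableSet_Ioi fun _ ht => hContent_lt_superposition_le hd hc ht
    _ ≤ ∑' Q, ∫⁻ t, (levels c Q).indicator (fun _ => (n * dyadicLength Q.scale) ^ d) t := by
        rw [lintegral_tsum fun Q =>
          (measurable_const.indicator (measurableSet_levels c Q)).aemeasurable]
        exact ENNReal.tsum_le_tsum fun Q => setLIntegral_le_lintegral _ _
    _ ≤ ∑' Q, n ^ d * (c Q * dyadicLength Q.scale ^ d) := ENNReal.tsum_le_tsum fun Q => by
        rw [lintegral_indicator_const (measurableSet_levels c Q), mul_pow, mul_assoc,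
          mul_comm (c Q)]
        gcongr
        exact volume_Ioi_inter_ofReal_preimage_Ico_le _ _
    _ = n ^ d * dyadicMass d c := ENNReal.tsum_mul_left

lemma HasDyadicMajorant.lintegral_hContent_le {d : ℕ} (hd : 0 < d)
    {h : EuclideanSpace ℝ (Fin n) → ℝ≥0∞} {A : ℝ≥0∞} (hA : A ≠ ⊤) (H : HasDyadicMajorant d h A) :
    ∫⁻ t in Ioi (0 : ℝ), hContent d {x | ENNReal.ofReal t ≤ h x} ≤ n ^ d * (2 * A) := by
  obtain ⟨c, hhc, hcA⟩ := H.const_mul 2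
  have hlt {t : ℝ} (ht : 0 < t) :
      {x | ENNReal.ofReal t ≤ h x} ⊆ {x | ENNReal.ofReal t < superposition c x} := fun x hx =>
    calc ENNReal.ofReal t < ENNReal.ofReal t + ENNReal.ofReal t :=
          ENNReal.lt_add_right ENNReal.ofReal_ne_top (ENNReal.ofReal_pos.2 ht).ne'
      _ = 2 * ENNReal.ofReal t := (two_mul _).symm
      _ ≤ 2 * h x := mul_le_mul_right hx 2
      _ ≤ superposition c x := hhc x
  calc ∫⁻ t in Ioi (0 : ℝ), hContent d {x | ENNReal.ofReal t ≤ h x}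
      ≤ ∫⁻ t in Ioi (0 : ℝ), hContent d {x | ENNReal.ofReal t < superposition c x} :=
        setLIntegral_mono' measurableSet_Ioi fun t ht => hContent_mono d (hlt ht)
    _ ≤ n ^ d * dyadicMass d c := lintegral_hContent_lt_superposition_le hd
        (ne_top_of_le_ne_top (ENNReal.mul_ne_top ENNReal.ofNat_ne_top hA) hcA)
    _ ≤ n ^ d * (2 * A) := by gcongr

end Choquet

section MaximalFunction

lemma exists_fin_three_floor_eq {a b : ℝ} (h : |a - b| < 1) :
    ∃ e : Fin 3, ⌊a⌋ = ⌊b⌋ + (e : ℕ) - 1 := by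
  rw [abs_lt] at h
  have hab : ⌊a⌋ < ⌊b⌋ + 2 := by
    have := Int.floor_le a
    have := Int.lt_floor_add_one b
    exact_mod_cast (by push_cast; linarith : (⌊a⌋ : ℝ) < (⌊b⌋ + 2 : ℤ))
  have hba : ⌊b⌋ < ⌊a⌋ + 2 := by
    have := Int.floor_le b
    have := Int.lt_floor_add_one a
    exact_mod_cast (by push_cast; linarith : (⌊b⌋ : ℝ) < (⌊a⌋ + 2 : ℤ))
  exact ⟨⟨(⌊a⌋ - ⌊b⌋ + 1).toNat, by lia⟩, by simp only; lia⟩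

lemma exists_nat_le_two_zpow_add (j : ℤ) (r : ℝ) :
    ∃ i : ℕ, r ≤ 2 ^ (j + i) ∧ (i = 0 ∨ (2 : ℝ) ^ (j + i - 1) ≤ r) := by
  classical
  have hex : ∃ i : ℕ, r ≤ 2 ^ (j + i) := by
    obtain ⟨i, hi⟩ := pow_unbounded_of_one_lt (r / 2 ^ j) one_lt_two
    refine ⟨i, ?_⟩
    rw [div_lt_iff₀ (by positivity)] at hi
    rw [zpow_add₀ two_ne_zero, zpow_natCast, mul_comm]
    exact hi.le
  refine ⟨Nat.find hex, Nat.find_spec hex, ?_⟩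
  rcases hi : Nat.find hex with _ | i
  · exact .inl rfl
  · have hlt := Nat.find_min hex (m := i) (by lia)
    exact .inr (by push_cast; rw [← add_assoc, add_sub_cancel_right]; exact (not_le.1 hlt).le)

variable {n : ℕ}

/-- The translates of a dyadic cube by at most one side length in each direction. -/
def DyadicCube.neighbor (Q : DyadicCube n) (ε : Fin n → Fin 3) : DyadicCube n :=
  ⟨Q.scale, fun m => Q.corner m + (ε m : ℕ) - 1⟩

lemma DyadicCube.exists_mem_neighbor {Q : DyadicCube n} {x y : EuclideanSpace ℝ (Fin n)}
    (hy : y ∈ Q.toSet) (hxy : dist x y < 2 ^ Q.scale) : ∃ ε, x ∈ (Q.neighbor ε).toSet := by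
  have hpos : (0 : ℝ) < 2 ^ Q.scale := by positivity
  have hfloor (m : Fin n) :
      ∃ e : Fin 3, ⌊x m / 2 ^ Q.scale⌋ = ⌊y m / 2 ^ Q.scale⌋ + (e : ℕ) - 1 := by
    refine exists_fin_three_floor_eq ?_
    rw [← sub_div, abs_div, abs_of_pos hpos, div_lt_one hpos]
    exact ((PiLp.norm_apply_le (x - y) m).trans_eq (dist_eq_norm x y).symm).trans_lt hxy
  choose ε hε using hfloor
  refine ⟨ε, DyadicCube.ext rfl (funext fun m => (hε m).trans ?_)⟩
  rw [neighbor, ← containing_eq_of_mem hy]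
  rfl

/-- The constant in the pointwise bound of the maximal function of the indicator of a cube. -/
noncomputable def maximalConstant (n : ℕ) : ℝ≥0∞ :=
  1 + 2 ^ n * (volume (ball (0 : EuclideanSpace ℝ (Fin n)) 1))⁻¹

lemma maximalConstant_ne_top : maximalConstant n ≠ ⊤ :=
  ENNReal.add_ne_top.2 ⟨ENNReal.one_ne_top, ENNReal.mul_ne_top (by simp)
    (ENNReal.inv_ne_top.2 (measure_ball_pos _ _ one_pos).ne')⟩

lemma dyadicLength_pow_le_volume_ball {j : ℤ} {r : ℝ} (hr : (2 : ℝ) ^ (j - 1) ≤ r)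
    (x : EuclideanSpace ℝ (Fin n)) :
    dyadicLength j ^ n ≤ maximalConstant n * volume (ball x r) := by
  set ω := volume (ball (0 : EuclideanSpace ℝ (Fin n)) 1)
  have hω_cancel : ω⁻¹ * ω = 1 :=
    ENNReal.inv_mul_cancel (measure_ball_pos _ _ one_pos).ne' measure_ball_lt_top.ne
  have hball : volume (ball x ((2 : ℝ) ^ (j - 1))) = dyadicLength (j - 1) ^ n * ω := by
    rw [Measure.addHaar_ball_of_pos _ _ (by positivity), finrank_euclideanSpace_fin,
      ENNReal.ofReal_pow (by positivity), dyadicLength_eq_ofReal]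
  calc dyadicLength j ^ n = 2 ^ n * dyadicLength (j - 1) ^ n * (ω⁻¹ * ω) := by
        rw [hω_cancel, mul_one, ← dyadicLength_add_one_pow, sub_add_cancel]
    _ = 2 ^ n * ω⁻¹ * volume (ball x ((2 : ℝ) ^ (j - 1))) := by rw [hball]; ring
    _ ≤ maximalConstant n * volume (ball x r) :=
        mul_le_mul' le_add_self (measure_mono (ball_subset_ball hr))

lemma volume_toSet_inter_ball_le {Q : DyadicCube n} {x : EuclideanSpace ℝ (Fin n)} {r : ℝ} {i : ℕ}
    (hi : i = 0 ∨ (2 : ℝ) ^ (Q.scale + i - 1) ≤ r) :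
    volume (Q.toSet ∩ ball x r) ≤
      maximalConstant n * dyadicLength (-(i * n)) * volume (ball x r) := by
  rcases hi with rfl | hr
  · simp only [Nat.cast_zero, zero_mul, neg_zero, dyadicLength_zero, mul_one]
    exact (measure_mono inter_subset_right).trans (le_mul_of_one_le_left' le_self_add)
  · calc volume (Q.toSet ∩ ball x r) ≤ volume Q.toSet := measure_mono inter_subset_left
      _ = dyadicLength (-(i * n)) * dyadicLength (Q.scale + i) ^ n := by
          rw [Q.volume_toSet, dyadicLength_pow, dyadicLength_pow, ← dyadicLength_add]
          congr 1
          ring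
      _ ≤ dyadicLength (-(i * n)) * (maximalConstant n * volume (ball x r)) := by
          gcongr
          exact dyadicLength_pow_le_volume_ball hr x
      _ = _ := by ring

lemma maxFn_indicator_toSet_le (Q : DyadicCube n) (x : EuclideanSpace ℝ (Fin n)) :
    maxFn (Q.toSet.indicator 1) x ≤
      ∑' i : ℕ, ∑ ε : Fin n → Fin 3, maximalConstant n * dyadicLength (-(i * n)) *
        ((Q.ancestor i).neighbor ε).toSet.indicator 1 x := by
  refine iSup₂_le fun r _ => ENNReal.div_le_of_le_mul ?_
  rw [lintegral_indicator_one Q.measurableSet_toSet, Measure.restrict_apply Q.measurableSet_toSet]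
  obtain hempty | ⟨y, hyQ, hyr⟩ := (Q.toSet ∩ ball x r).eq_empty_or_nonempty
  · simp [hempty]
  obtain ⟨i, hri, hi⟩ := exists_nat_le_two_zpow_add Q.scale r
  obtain ⟨ε, hε⟩ := DyadicCube.exists_mem_neighbor (Q.subset_ancestor i hyQ)
    ((mem_ball'.1 hyr).trans_le hri)
  refine (volume_toSet_inter_ball_le hi).trans (mul_le_mul_left ?_ _)
  refine le_trans ?_ (ENNReal.le_tsum i)
  refine le_of_eq_of_le ?_ (Finset.single_le_sum (fun _ _ => zero_le) (Finset.mem_univ ε))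
  simp [hε]

lemma HasDyadicMajorant.maxFn_indicator_toSet {d : ℕ} (hd : d < n) (Q : DyadicCube n) :
    HasDyadicMajorant d (maxFn (Q.toSet.indicator 1))
      (2 * 3 ^ n * maximalConstant n * dyadicLength Q.scale ^ d) := by
  refine (tsum fun i : ℕ => sum fun ε : Fin n → Fin 3 =>
    (indicator_toSet d ((Q.ancestor i).neighbor ε)).const_mul
      (maximalConstant n * dyadicLength (-(i * n)))).mono (maxFn_indicator_toSet_le Q) ?_
  have hdecay (i : ℕ) : dyadicLength (-(i * n)) * dyadicLength (Q.scale + i) ^ d ≤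
      dyadicLength Q.scale ^ d * dyadicLength (-i) := by
    rw [dyadicLength_pow, dyadicLength_pow, ← dyadicLength_add, ← dyadicLength_add]
    have hdn : (i : ℤ) * (d + 1) ≤ i * n := by gcongr; exact_mod_cast hd
    exact dyadicLength_monotone (by linarith)
  calc ∑' i : ℕ, ∑ _ : Fin n → Fin 3,
          maximalConstant n * dyadicLength (-(i * n)) * dyadicLength (Q.scale + i) ^ d
      ≤ ∑' i : ℕ, ∑ _ : Fin n → Fin 3,
          maximalConstant n * (dyadicLength Q.scale ^ d * dyadicLength (-i)) := by
        simp only [mul_assoc]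
        gcongr ∑' i : ℕ, ∑ _ : Fin n → Fin 3, maximalConstant n * ?_ with i
        exact hdecay i
    _ = 2 * 3 ^ n * maximalConstant n * dyadicLength Q.scale ^ d := by
        simp only [Finset.sum_const, Finset.card_univ, Fintype.card_pi, Fintype.card_fin,
          Finset.prod_const, nsmul_eq_mul, ENNReal.tsum_mul_left, tsum_dyadicLength_neg]
        push_cast
        ring

lemma maxFn_mono : Monotone (maxFn (n := n)) := fun _ _ h _ =>
  iSup₂_mono fun _ _ => ENNReal.div_le_div_right (lintegral_mono h) _

lemma maxFn_superposition_le (c : DyadicCube n → ℝ≥0∞) (x : EuclideanSpace ℝ (Fin n)) :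
    maxFn (superposition c) x ≤ ∑' Q, c Q * maxFn (Q.toSet.indicator 1) x := by
  refine iSup₂_le fun r hr => ?_
  rw [setLIntegral_superposition, div_eq_mul_inv, ← ENNReal.tsum_mul_right]
  simp only [mul_assoc]
  gcongr with Q
  exact le_iSup₂ (f := fun (r : ℝ) (_ : 0 < r) =>
    (∫⁻ y in ball x r, Q.toSet.indicator 1 y) / volume (ball x r)) r hr

lemma HasDyadicMajorant.maxFn {d : ℕ} (hd : d < n) {h : EuclideanSpace ℝ (Fin n) → ℝ≥0∞}
    {A : ℝ≥0∞} (H : HasDyadicMajorant d h A) :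
    HasDyadicMajorant d (maxFn h) (2 * 3 ^ n * maximalConstant n * A) :=
  H.transfer maxFn_mono maxFn_superposition_le fun Q => maxFn_indicator_toSet hd Q

end MaximalFunction

section DyadicRiesz

variable {n : ℕ}

/-- The dyadic model of the Riesz potential of order one, `∑ Q ∋ x, ℓ(Q) ^ (1 - n) * ∫ Q, v`. -/
noncomputable def dyadicRiesz (v : EuclideanSpace ℝ (Fin n) → ℝ≥0∞)
    (x : EuclideanSpace ℝ (Fin n)) : ℝ≥0∞ :=
  ∑' j : ℤ, dyadicLength j * (dyadicLength j ^ n)⁻¹ *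
    ∫⁻ y in (DyadicCube.containing j x).toSet, v y

lemma dyadicRiesz_mono : Monotone (dyadicRiesz (n := n)) := fun _ _ h _ =>
  ENNReal.tsum_le_tsum fun _ => mul_le_mul_right (lintegral_mono h) _

lemma dyadicRiesz_superposition_le (c : DyadicCube n → ℝ≥0∞) (x : EuclideanSpace ℝ (Fin n)) :
    dyadicRiesz (superposition c) x ≤ ∑' Q, c Q * dyadicRiesz (Q.toSet.indicator 1) x := by
  simp only [dyadicRiesz, setLIntegral_superposition, ← ENNReal.tsum_mul_left,
    mul_left_comm _ (c _)]
  exact ENNReal.tsum_comm.le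

lemma tsum_int_eq_tsum_add_tsum_sub (f : ℤ → ℝ≥0∞) (j : ℤ) :
    ∑' i, f i = ∑' i : ℕ, f (j + i) + ∑' i : ℕ, f (j - 1 - i) := by
  rw [← (Equiv.addLeft j).tsum_eq f, tsum_of_nat_of_neg_add_one ENNReal.summable ENNReal.summable]
  simp only [Equiv.coe_addLeft, neg_add_rev, sub_eq_add_neg, add_assoc]

lemma setLIntegral_containing_add_indicator_le (R : DyadicCube n) (i : ℕ)
    (x : EuclideanSpace ℝ (Fin n)) :
    ∫⁻ y in (DyadicCube.containing (R.scale + i) x).toSet, R.toSet.indicator 1 y ≤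
      dyadicLength R.scale ^ n * (R.ancestor i).toSet.indicator 1 x := by
  rw [lintegral_indicator_one R.measurableSet_toSet, Measure.restrict_apply R.measurableSet_toSet]
  obtain hempty | ⟨y, hyR, hyx⟩ :=
    (R.toSet ∩ (DyadicCube.containing (R.scale + i) x).toSet).eq_empty_or_nonempty
  · simp [hempty]
  have hx : x ∈ (R.ancestor i).toSet :=
    (DyadicCube.containing_eq_of_mem hyx).symm.trans (R.subset_ancestor i hyR)
  rw [indicator_of_mem hx, Pi.one_apply, mul_one, ← R.volume_toSet]
  exact measure_mono inter_subset_left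

lemma setLIntegral_containing_sub_indicator_le (R : DyadicCube n) (i : ℕ)
    (x : EuclideanSpace ℝ (Fin n)) :
    ∫⁻ y in (DyadicCube.containing (R.scale - 1 - i) x).toSet, R.toSet.indicator 1 y ≤
      dyadicLength (R.scale - 1 - i) ^ n * R.toSet.indicator 1 x := by
  rw [lintegral_indicator_one R.measurableSet_toSet, Measure.restrict_apply R.measurableSet_toSet]
  obtain hempty | ⟨y, hyR, hyx⟩ :=
    (R.toSet ∩ (DyadicCube.containing (R.scale - 1 - i) x).toSet).eq_empty_or_nonempty
  · simp [hempty]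
  have hx : x ∈ R.toSet := by
    have hscale : R.scale = R.scale - 1 - i + (i + 1 : ℕ) := by push_cast; ring
    have hxy := congrArg (DyadicCube.ancestor (i + 1)) (DyadicCube.containing_eq_of_mem hyx)
    change _ = DyadicCube.ancestor (i + 1) (DyadicCube.containing (R.scale - 1 - i) x) at hxy
    change DyadicCube.containing R.scale x = R
    rw [hscale, DyadicCube.containing_add, ← hxy]
    exact DyadicCube.containing_add _ _ y ▸ hscale ▸ DyadicCube.containing_eq_of_mem hyR
  rw [indicator_of_mem hx, Pi.one_apply, mul_one]
  exact (measure_mono inter_subset_right).trans_eq (DyadicCube.volume_toSet _)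

lemma dyadicRiesz_indicator_toSet_le (R : DyadicCube n) (x : EuclideanSpace ℝ (Fin n)) :
    dyadicRiesz (R.toSet.indicator 1) x ≤
      ∑' i : ℕ, dyadicLength (R.scale + i) * (dyadicLength (R.scale + i) ^ n)⁻¹ *
        dyadicLength R.scale ^ n * (R.ancestor i).toSet.indicator 1 x +
      dyadicLength R.scale * R.toSet.indicator 1 x := by
  rw [dyadicRiesz, tsum_int_eq_tsum_add_tsum_sub _ R.scale]
  gcongr ∑' i : ℕ, ?_ + ?_ with i
  · rw [mul_assoc _ (dyadicLength R.scale ^ n)]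
    gcongr
    exact setLIntegral_containing_add_indicator_le R i x
  · calc ∑' i : ℕ, dyadicLength (R.scale - 1 - i) * (dyadicLength (R.scale - 1 - i) ^ n)⁻¹ *
          ∫⁻ y in (DyadicCube.containing (R.scale - 1 - i) x).toSet, R.toSet.indicator 1 y
        ≤ ∑' i : ℕ, dyadicLength (R.scale - 1 - i) * (dyadicLength (R.scale - 1 - i) ^ n)⁻¹ *
            (dyadicLength (R.scale - 1 - i) ^ n * R.toSet.indicator 1 x) := by
          gcongr
          exact setLIntegral_containing_sub_indicator_le R _ x
      _ = ∑' i : ℕ, dyadicLength (R.scale - 1 - i) * R.toSet.indicator 1 x := by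
          simp only [mul_assoc, ← mul_assoc (_)⁻¹, inv_dyadicLength_pow_mul_cancel, one_mul]
      _ = dyadicLength R.scale * R.toSet.indicator 1 x := by
          simp only [sub_eq_add_neg _ (Nat.cast _), dyadicLength_add _ (-(Nat.cast _)),
            ENNReal.tsum_mul_right, ENNReal.tsum_mul_left, tsum_dyadicLength_neg]
          rw [mul_comm (dyadicLength _) 2, ← dyadicLength_add_one, sub_add_cancel]

lemma HasDyadicMajorant.dyadicRiesz_indicator_toSet {d : ℕ} (hd : d + 1 < n) (R : DyadicCube n) :
    HasDyadicMajorant d (dyadicRiesz (R.toSet.indicator 1))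
      (3 * dyadicLength R.scale ^ (d + 1)) := by
  refine ((tsum fun i : ℕ => (indicator_toSet d (R.ancestor i)).const_mul _).add
    ((indicator_toSet d R).const_mul _)).mono (dyadicRiesz_indicator_toSet_le R) ?_
  have hdecay (i : ℕ) : dyadicLength (R.scale + i) * (dyadicLength (R.scale + i) ^ n)⁻¹ *
      dyadicLength R.scale ^ n * dyadicLength (R.scale + i) ^ d ≤
      dyadicLength R.scale ^ (d + 1) * dyadicLength (-i) := by
    simp only [dyadicLength_pow, ← dyadicLength_neg, ← dyadicLength_add]
    have hdn : (i : ℤ) * (d + 1 + 1) ≤ i * n := by gcongr; exact_mod_cast hd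
    exact dyadicLength_monotone (by push_cast; linarith)
  calc ∑' i : ℕ, dyadicLength (R.scale + i) * (dyadicLength (R.scale + i) ^ n)⁻¹ *
          dyadicLength R.scale ^ n * dyadicLength (R.scale + i) ^ d +
        dyadicLength R.scale * dyadicLength R.scale ^ d
      ≤ ∑' i : ℕ, dyadicLength R.scale ^ (d + 1) * dyadicLength (-i) +
          dyadicLength R.scale ^ (d + 1) :=
        add_le_add (ENNReal.tsum_le_tsum hdecay) (pow_succ' _ d).ge
    _ = 3 * dyadicLength R.scale ^ (d + 1) := by
        rw [ENNReal.tsum_mul_left, tsum_dyadicLength_neg]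
        ring

lemma HasDyadicMajorant.dyadicRiesz {d : ℕ} (hd : d + 1 < n)
    {v : EuclideanSpace ℝ (Fin n) → ℝ≥0∞} {A : ℝ≥0∞} (H : HasDyadicMajorant (d + 1) v A) :
    HasDyadicMajorant d (dyadicRiesz v) (3 * A) :=
  H.transfer dyadicRiesz_mono dyadicRiesz_superposition_le (dyadicRiesz_indicator_toSet hd)

end DyadicRiesz

section Poincare

open AffineMap

variable {E : Type*} [NormedAddCommGroup E] [NormedSpace ℝ E]
  {F : Type*} [NormedAddCommGroup F] [NormedSpace ℝ F] [CompleteSpace F]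

lemma enorm_sub_le_setLIntegral_enorm_fderiv {w : E → F} (hw : ContDiff ℝ 1 w) (x y : E) :
    ‖w x - w y‖ₑ ≤ ‖x - y‖ₑ * ∫⁻ t in Ioc (0 : ℝ) 1, ‖fderiv ℝ w (lineMap x y t)‖ₑ := by
  have hderiv (t : ℝ) :
      HasDerivAt (fun t : ℝ => w (lineMap x y t)) (fderiv ℝ w (lineMap x y t) (y - x)) t :=
    (hw.differentiable one_ne_zero _).hasFDerivAt.comp_hasDerivAt t hasDerivAt_lineMap
  have hcont : Continuous fun t : ℝ => fderiv ℝ w (lineMap x y t) :=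
    (hw.continuous_fderiv one_ne_zero).comp lineMap_continuous
  have hftc := intervalIntegral.integral_eq_sub_of_hasDerivAt (fun t _ => hderiv t)
    ((hcont.clm_apply continuous_const).intervalIntegrable 0 1)
  rw [lineMap_apply_zero, lineMap_apply_one, intervalIntegral.integral_of_le zero_le_one] at hftc
  rw [enorm_sub_rev, ← hftc, ← lintegral_const_mul _ hcont.enorm.measurable]
  refine (enorm_integral_le_lintegral_enorm _).trans (lintegral_mono fun t => ?_)
  rw [mul_comm, enorm_sub_rev]
  exact ContinuousLinearMap.le_opENorm _ _

variable [FiniteDimensional ℝ E] [MeasurableSpace E] [BorelSpace E] (μ : Measure E)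
  [μ.IsAddHaarMeasure] {S : Set E} {G : E → ℝ≥0∞}

lemma lintegral_comp_smul_add {H : E → ℝ≥0∞} (hH : Measurable H) {a : ℝ} (ha : a ≠ 0) (b : E) :
    ∫⁻ y, H (a • y + b) ∂μ = ENNReal.ofReal |(a ^ Module.finrank ℝ E)⁻¹| * ∫⁻ y, H y ∂μ := by
  have hmap := lintegral_map (μ := μ) (hH.comp (measurable_add_const b)) (measurable_const_smul a)
  simp only [Function.comp_apply] at hmap
  rw [← hmap, Measure.map_addHaar_smul μ ha, lintegral_smul_measure, lintegral_add_right_eq_self,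
    smul_eq_mul]

lemma setLIntegral_comp_lineMap_le (hS : Convex ℝ S) (hSm : MeasurableSet S) (hG : Measurable G)
    {a : ℝ} (ha : 1 / 2 ≤ a) (ha1 : a ≤ 1) {z : E} (hz : z ∈ S) :
    ∫⁻ y in S, G (lineMap z y a) ∂μ ≤ 2 ^ Module.finrank ℝ E * ∫⁻ y in S, G y ∂μ := by
  have ha0 : 0 < a := by linarith
  have hpow : (a ^ Module.finrank ℝ E)⁻¹ ≤ 2 ^ Module.finrank ℝ E := by
    rw [← inv_pow]
    gcongr
    rw [inv_le_comm₀ ha0 two_pos]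
    linarith
  calc ∫⁻ y in S, G (lineMap z y a) ∂μ
      ≤ ∫⁻ y, S.indicator G (a • y + (1 - a) • z) ∂μ := by
        rw [← lintegral_indicator hSm]
        refine lintegral_mono (indicator_le fun y hy => ?_)
        rw [add_comm, ← lineMap_apply_module,
          indicator_of_mem (hS.lineMap_mem hz hy ⟨ha0.le, ha1⟩)]
    _ = ENNReal.ofReal |(a ^ Module.finrank ℝ E)⁻¹| * ∫⁻ y in S, G y ∂μ := by
        rw [lintegral_comp_smul_add μ (hG.indicator hSm) ha0.ne', lintegral_indicator hSm]
    _ ≤ 2 ^ Module.finrank ℝ E * ∫⁻ y in S, G y ∂μ := by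
        gcongr
        rw [abs_of_pos (by positivity), ← ENNReal.ofReal_ofNat, ← ENNReal.ofReal_pow (by simp)]
        exact ENNReal.ofReal_le_ofReal hpow

/-- One of the two endpoints of the segment has weight at least `1 / 2`; integrating in that
endpoint first makes the Jacobian of the change of variables at most `2 ^ n`. -/
lemma setLIntegral_setLIntegral_comp_lineMap_le (hS : Convex ℝ S) (hSm : MeasurableSet S)
    (hG : Continuous G) {t : ℝ} (ht : t ∈ Ioc (0 : ℝ) 1) :
    ∫⁻ x in S, ∫⁻ y in S, G (lineMap x y t) ∂μ ∂μ ≤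
      2 ^ Module.finrank ℝ E * (∫⁻ z in S, G z ∂μ) * μ S := by
  rw [← setLIntegral_const]
  rcases le_total (1 / 2) t with h | h
  · exact setLIntegral_mono' hSm fun x hx =>
      setLIntegral_comp_lineMap_le μ hS hSm hG.measurable h ht.2 hx
  · have hcont : Continuous (Function.uncurry fun x y => G (lineMap x y t)) := by
      simp only [lineMap_apply_module, Function.uncurry_def]
      fun_prop
    rw [lintegral_lintegral_swap hcont.aemeasurable]
    refine setLIntegral_mono' hSm fun y hy => ?_
    simp only [← lineMap_apply_one_sub y]
    exact setLIntegral_comp_lineMap_le μ hS hSm hG.measurable (by linarith) (by linarith [ht.1]) hy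

theorem setLIntegral_setLIntegral_enorm_sub_le {w : E → F} (hw : ContDiff ℝ 1 w)
    (hS : Convex ℝ S) (hSm : MeasurableSet S) :
    ∫⁻ x in S, ∫⁻ y in S, ‖w x - w y‖ₑ ∂μ ∂μ ≤
      ediam S * (2 ^ Module.finrank ℝ E * (∫⁻ z in S, ‖fderiv ℝ w z‖ₑ ∂μ) * μ S) := by
  set G : E → ℝ≥0∞ := fun z => ‖fderiv ℝ w z‖ₑ
  have hG : Continuous G := (hw.continuous_fderiv one_ne_zero).enorm
  have hmeas : Measurable fun p : (E × E) × ℝ => G (lineMap p.1.1 p.1.2 p.2) := by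
    simp only [lineMap_apply_module]
    exact (hG.comp (by fun_prop)).measurable
  have hmeas_left : Measurable fun p : E × E => ∫⁻ t in Ioc (0 : ℝ) 1, G (lineMap p.1 p.2 t) :=
    hmeas.lintegral_prod_right'
  calc ∫⁻ x in S, ∫⁻ y in S, ‖w x - w y‖ₑ ∂μ ∂μ
      ≤ ∫⁻ x in S, ∫⁻ y in S, (ediam S * ∫⁻ t in Ioc (0 : ℝ) 1, G (lineMap x y t)) ∂μ ∂μ :=
        setLIntegral_mono' hSm fun x hx => setLIntegral_mono' hSm fun y hy =>
          (enorm_sub_le_setLIntegral_enorm_fderiv hw x y).trans <|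
            mul_le_mul_left (edist_eq_enorm_sub x y ▸ edist_le_ediam_of_mem hx hy) _
    _ = ediam S * ∫⁻ t in Ioc (0 : ℝ) 1, ∫⁻ x in S, ∫⁻ y in S, G (lineMap x y t) ∂μ ∂μ := by
        rw [← lintegral_prod (μ := μ.restrict S) (ν := μ.restrict S)
          (fun p => ediam S * ∫⁻ t in Ioc (0 : ℝ) 1, G (lineMap p.1 p.2 t))
          (hmeas_left.const_mul _).aemeasurable, lintegral_const_mul _ hmeas_left,
          lintegral_lintegral_swap hmeas.aemeasurable]
        exact congrArg _ (lintegral_congr fun t =>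
          lintegral_prod _ (hmeas.comp measurable_prodMk_right).aemeasurable)
    _ ≤ ediam S * ∫⁻ t in Ioc (0 : ℝ) 1,
          2 ^ Module.finrank ℝ E * (∫⁻ z in S, G z ∂μ) * μ S :=
        mul_le_mul_right (setLIntegral_mono' measurableSet_Ioc fun t ht =>
          setLIntegral_setLIntegral_comp_lineMap_le μ hS hSm hG ht) _
    _ = ediam S * (2 ^ Module.finrank ℝ E * (∫⁻ z in S, G z ∂μ) * μ S) := by simp

end Poincare

section Oscillation

open Filter Topology

lemma measure_mul_setLIntegral_enorm_sub_le {α F : Type*} [TopologicalSpace α] [MeasurableSpace α]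
    [OpensMeasurableSpace α] [NormedAddCommGroup F] {u : α → F} (hu : Continuous u) (μ : Measure α)
    {s t : Set α} (hst : s ⊆ t) (x : α) :
    μ s * ∫⁻ y in t, ‖u x - u y‖ₑ ∂μ ≤
      μ t * ∫⁻ z in s, ‖u x - u z‖ₑ ∂μ + ∫⁻ y in t, ∫⁻ z in t, ‖u y - u z‖ₑ ∂μ ∂μ := by
  have hmeas : Measurable fun y => ‖u x - u y‖ₑ := (continuous_const.sub hu).enorm.measurable
  have htriangle (y : α) :
      μ s * ‖u x - u y‖ₑ ≤ (∫⁻ z in s, ‖u x - u z‖ₑ ∂μ) + ∫⁻ z in t, ‖u y - u z‖ₑ ∂μ := by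
    calc μ s * ‖u x - u y‖ₑ = ∫⁻ _ in s, ‖u x - u y‖ₑ ∂μ := by rw [setLIntegral_const, mul_comm]
      _ ≤ ∫⁻ z in s, (‖u x - u z‖ₑ + ‖u y - u z‖ₑ) ∂μ := lintegral_mono fun z => by
          simpa only [edist_eq_enorm_sub] using edist_triangle_right (u x) (u y) (u z)
      _ = (∫⁻ z in s, ‖u x - u z‖ₑ ∂μ) + ∫⁻ z in s, ‖u y - u z‖ₑ ∂μ := lintegral_add_left hmeas _
      _ ≤ _ := by gcongr
  calc μ s * ∫⁻ y in t, ‖u x - u y‖ₑ ∂μ = ∫⁻ y in t, μ s * ‖u x - u y‖ₑ ∂μ :=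
        (lintegral_const_mul _ hmeas).symm
    _ ≤ ∫⁻ y in t, ((∫⁻ z in s, ‖u x - u z‖ₑ ∂μ) + ∫⁻ z in t, ‖u y - u z‖ₑ ∂μ) ∂μ :=
        lintegral_mono htriangle
    _ = _ := by rw [lintegral_add_left measurable_const, setLIntegral_const, mul_comm]

variable {n : ℕ} {F : Type*} [NormedAddCommGroup F] {u : EuclideanSpace ℝ (Fin n) → F}

/-- The mean of `‖u x - u y‖` as `y` ranges over the dyadic cube of scale `j` containing `x`. -/
noncomputable def meanOscillation (u : EuclideanSpace ℝ (Fin n) → F) (x : EuclideanSpace ℝ (Fin n))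
    (j : ℤ) : ℝ≥0∞ :=
  (dyadicLength j ^ n)⁻¹ * ∫⁻ y in (DyadicCube.containing j x).toSet, ‖u x - u y‖ₑ

lemma inv_dyadicLength_pow_mul_setLIntegral_const (a : ℝ≥0∞) (j : ℤ)
    (x : EuclideanSpace ℝ (Fin n)) :
    (dyadicLength j ^ n)⁻¹ * ∫⁻ _ in (DyadicCube.containing j x).toSet, a = a := by
  rw [setLIntegral_const, DyadicCube.volume_toSet, mul_left_comm, DyadicCube.containing,
    inv_dyadicLength_pow_mul_cancel, mul_one]

lemma enorm_le_meanOscillation_add (hu : Continuous u) (x : EuclideanSpace ℝ (Fin n)) (j : ℤ) :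
    ‖u x‖ₑ ≤ meanOscillation u x j + (dyadicLength j ^ n)⁻¹ * ∫⁻ y, ‖u y‖ₑ := by
  calc ‖u x‖ₑ = (dyadicLength j ^ n)⁻¹ * ∫⁻ _ in (DyadicCube.containing j x).toSet, ‖u x‖ₑ :=
        (inv_dyadicLength_pow_mul_setLIntegral_const _ j x).symm
    _ ≤ (dyadicLength j ^ n)⁻¹ *
          ∫⁻ y in (DyadicCube.containing j x).toSet, (‖u x - u y‖ₑ + ‖u y‖ₑ) := by
        gcongr with y
        simpa using enorm_add_le (u x - u y) (u y)
    _ = meanOscillation u x j + (dyadicLength j ^ n)⁻¹ *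
          ∫⁻ y in (DyadicCube.containing j x).toSet, ‖u y‖ₑ := by
        have hmeas : Measurable fun y => ‖u x - u y‖ₑ := (continuous_const.sub hu).enorm.measurable
        rw [lintegral_add_left hmeas, mul_add, meanOscillation]
    _ ≤ _ := by
        gcongr
        exact Measure.restrict_le_self

lemma tendsto_mul_dyadicLength_atBot {a : ℝ≥0∞} (ha : a ≠ ⊤) :
    Tendsto (fun j => a * dyadicLength j) atBot (𝓝 0) := by
  have hpow : Tendsto (fun m : ℕ => a * (2⁻¹ : ℝ≥0∞) ^ m) atTop (𝓝 (a * 0)) :=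
    ENNReal.Tendsto.const_mul
      (ENNReal.tendsto_pow_atTop_nhds_zero_of_lt_one ENNReal.one_half_lt_one) (.inr ha)
  rw [mul_zero] at hpow
  refine tendsto_order.2 ⟨fun b hb => absurd hb not_lt_zero, fun ε hε => ?_⟩
  obtain ⟨m, hm⟩ := (hpow.eventually_lt_const hε).exists
  filter_upwards [eventually_le_atBot (-(m : ℤ))] with j hj
  refine lt_of_le_of_lt ?_ hm
  rw [← ENNReal.inv_pow, ← dyadicLength_natCast, ← dyadicLength_neg]
  exact mul_le_mul_right (dyadicLength_monotone hj) a

lemma tendsto_inv_dyadicLength_pow_mul_atTop (hn : 0 < n) {a : ℝ≥0∞} (ha : a ≠ ⊤) :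
    Tendsto (fun j => (dyadicLength j ^ n)⁻¹ * a) atTop (𝓝 0) := by
  have hscale : Tendsto (fun j : ℤ => -(j * n)) atTop atBot :=
    tendsto_neg_atTop_atBot.comp (tendsto_id.atTop_mul_const' (Int.natCast_pos.2 hn))
  refine ((tendsto_mul_dyadicLength_atBot ha).comp hscale).congr fun j => ?_
  rw [Function.comp_apply, dyadicLength_neg, dyadicLength_pow, mul_comm]

lemma eventually_meanOscillation_le_atBot (hu : Continuous u) (x : EuclideanSpace ℝ (Fin n))
    {ε : ℝ≥0∞} (hε : 0 < ε) : ∀ᶠ j in atBot, meanOscillation u x j ≤ ε := by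
  obtain ⟨δ, hδ, hball⟩ := EMetric.continuous_iff.1 hu x ε hε
  have hsmall := (tendsto_mul_dyadicLength_atBot (ENNReal.natCast_ne_top n)).eventually_lt_const hδ
  filter_upwards [hsmall] with j hj
  rw [← inv_dyadicLength_pow_mul_setLIntegral_const ε j x, meanOscillation]
  refine mul_le_mul_right (setLIntegral_mono' (DyadicCube.measurableSet_toSet _) fun y hy => ?_) _
  rw [← edist_eq_enorm_sub, edist_comm]
  exact (hball y ((DyadicCube.edist_le_of_mem hy
    (DyadicCube.mem_toSet_containing j x)).trans_lt hj)).le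

variable [NormedSpace ℝ F] [CompleteSpace F]

lemma DyadicCube.setLIntegral_setLIntegral_enorm_sub_le (hu : ContDiff ℝ 1 u) (Q : DyadicCube n) :
    ∫⁻ x in Q.toSet, ∫⁻ y in Q.toSet, ‖u x - u y‖ₑ ≤
      n * 2 ^ n * dyadicLength Q.scale * dyadicLength Q.scale ^ n *
        ∫⁻ z in Q.toSet, ‖fderiv ℝ u z‖ₑ := by
  have h := _root_.setLIntegral_setLIntegral_enorm_sub_le volume hu Q.convex_toSet
    Q.measurableSet_toSet
  rw [finrank_euclideanSpace_fin, volume_toSet] at h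
  refine (h.trans (mul_le_mul_left Q.ediam_toSet_le _)).trans_eq ?_
  ring

lemma meanOscillation_add_one_le (hu : ContDiff ℝ 1 u) (x : EuclideanSpace ℝ (Fin n)) (j : ℤ) :
    meanOscillation u x (j + 1) ≤ meanOscillation u x j + n * 4 ^ n * (dyadicLength (j + 1) *
      (dyadicLength (j + 1) ^ n)⁻¹ *
        ∫⁻ y in (DyadicCube.containing (j + 1) x).toSet, ‖fderiv ℝ u y‖ₑ) := by
  set P := DyadicCube.containing (j + 1) x
  set Q := DyadicCube.containing j x
  have hQP : Q.toSet ⊆ P.toSet := DyadicCube.monotone_toSet_containing x (by simp)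
  have hcompare := (measure_mul_setLIntegral_enorm_sub_le hu.continuous volume hQP x).trans
    (add_le_add_right (P.setLIntegral_setLIntegral_enorm_sub_le hu) _)
  rw [Q.volume_toSet, P.volume_toSet, show P.scale = j + 1 from rfl,
    show Q.scale = j from rfl] at hcompare
  have hp := inv_dyadicLength_pow_mul_cancel (j + 1) n
  have hq := inv_dyadicLength_pow_mul_cancel j n
  have hinv : (dyadicLength j ^ n)⁻¹ = 2 ^ n * (dyadicLength (j + 1) ^ n)⁻¹ := by
    rw [dyadicLength_add_one_pow, ENNReal.mul_inv (.inl (by simp)) (.inl (by simp)), ← mul_assoc,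
      ENNReal.mul_inv_cancel (by simp) (by simp), one_mul]
  rw [meanOscillation, meanOscillation]
  set I := ∫⁻ y in P.toSet, ‖fderiv ℝ u y‖ₑ
  set p := dyadicLength (j + 1) ^ n
  set q := dyadicLength j ^ n
  calc p⁻¹ * ∫⁻ y in P.toSet, ‖u x - u y‖ₑ
      = p⁻¹ * q⁻¹ * (q * ∫⁻ y in P.toSet, ‖u x - u y‖ₑ) := by
        rw [mul_assoc, ← mul_assoc q⁻¹, hq, one_mul]
    _ ≤ p⁻¹ * q⁻¹ * (p * (∫⁻ y in Q.toSet, ‖u x - u y‖ₑ) +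
          n * 2 ^ n * dyadicLength (j + 1) * p * I) := by gcongr
    _ = p⁻¹ * p * (q⁻¹ * ∫⁻ y in Q.toSet, ‖u x - u y‖ₑ) +
          p⁻¹ * p * (q⁻¹ * (n * 2 ^ n * dyadicLength (j + 1) * I)) := by ring
    _ = _ := by
        rw [hp, one_mul, one_mul, hinv, show (4 : ℝ≥0∞) = 2 * 2 by norm_num, mul_pow]
        ring

lemma meanOscillation_add_natCast_le (hu : ContDiff ℝ 1 u) (x : EuclideanSpace ℝ (Fin n)) (j : ℤ)
    (i : ℕ) :
    meanOscillation u x (j + i) ≤ meanOscillation u x j + n * 4 ^ n * ∑ m ∈ Finset.range i,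
      (dyadicLength (j + m + 1) * (dyadicLength (j + m + 1) ^ n)⁻¹ *
        ∫⁻ y in (DyadicCube.containing (j + m + 1) x).toSet, ‖fderiv ℝ u y‖ₑ) := by
  induction i with
  | zero => simp
  | succ i ih =>
    rw [Finset.sum_range_succ, mul_add, ← add_assoc, Nat.cast_succ, ← add_assoc j]
    exact (meanOscillation_add_one_le hu x (j + i)).trans (add_le_add_left ih _)

lemma meanOscillation_le_add_dyadicRiesz (hu : ContDiff ℝ 1 u) (x : EuclideanSpace ℝ (Fin n))
    {i j : ℤ} (h : i ≤ j) :
    meanOscillation u x j ≤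
      meanOscillation u x i + n * 4 ^ n * dyadicRiesz (fun y => ‖fderiv ℝ u y‖ₑ) x := by
  obtain ⟨m, rfl⟩ := Int.le.dest h
  refine (meanOscillation_add_natCast_le hu x i m).trans ?_
  gcongr
  refine (ENNReal.sum_le_tsum _).trans (ENNReal.tsum_comp_le_tsum_of_injective
    (f := fun m : ℕ => i + m + 1) (fun a b hab => ?_) fun j => dyadicLength j *
      (dyadicLength j ^ n)⁻¹ * ∫⁻ y in (DyadicCube.containing j x).toSet, ‖fderiv ℝ u y‖ₑ)
  simpa using hab

theorem enorm_le_dyadicRiesz (hn : 0 < n) (hu : ContDiff ℝ 1 u) (hi : Integrable u)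
    (x : EuclideanSpace ℝ (Fin n)) :
    ‖u x‖ₑ ≤ n * 4 ^ n * dyadicRiesz (fun y => ‖fderiv ℝ u y‖ₑ) x := by
  refine le_of_forall_pos_le_add fun ε hε => ?_
  have hε2 : 0 < ε / 2 := ENNReal.half_pos hε.ne'
  obtain ⟨j, hj⟩ :=
    ((tendsto_inv_dyadicLength_pow_mul_atTop hn hi.2.ne).eventually_lt_const hε2).exists
  obtain ⟨i, hosc, hij⟩ := ((eventually_meanOscillation_le_atBot hu.continuous x hε2).and
    (eventually_le_atBot j)).exists
  calc ‖u x‖ₑ ≤ meanOscillation u x j + (dyadicLength j ^ n)⁻¹ * ∫⁻ y, ‖u y‖ₑ :=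
        enorm_le_meanOscillation_add hu.continuous x j
    _ ≤ (meanOscillation u x i + n * 4 ^ n * dyadicRiesz (fun y => ‖fderiv ℝ u y‖ₑ) x) + ε / 2 :=
        add_le_add (meanOscillation_le_add_dyadicRiesz hu x hij) hj.le
    _ ≤ (ε / 2 + n * 4 ^ n * dyadicRiesz (fun y => ‖fderiv ℝ u y‖ₑ) x) + ε / 2 := by gcongr
    _ = _ := by rw [add_comm (ε / 2), add_assoc, ENNReal.add_halves]

end Oscillation

section SuperlevelPerimeter

open Filter Topology

lemma lintegral_enorm_deriv_smoothTransition_le :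
    ∫⁻ t, ‖deriv Real.smoothTransition t‖ₑ ≤ 1 := by
  have hdiff : Differentiable ℝ Real.smoothTransition :=
    (Real.smoothTransition.contDiff (n := 1)).differentiable one_ne_zero
  calc ∫⁻ t, ‖deriv Real.smoothTransition t‖ₑ
      = ∫⁻ t in univ, ENNReal.ofReal (deriv Real.smoothTransition t) := by
        simp only [Real.enorm_of_nonneg Real.smoothTransition.monotone.deriv_nonneg,
          Measure.restrict_univ]
    _ = volume (Real.smoothTransition '' univ) :=
        lintegral_deriv_eq_volume_image_of_monotoneOn .univ
          (fun t _ => (hdiff t).hasDerivAt.hasDerivWithinAt)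
          (Real.smoothTransition.monotone.monotoneOn _)
    _ ≤ volume (Icc (0 : ℝ) 1) := measure_mono <| image_subset_iff.2 fun t _ =>
        ⟨Real.smoothTransition.nonneg t, Real.smoothTransition.le_one t⟩
    _ = 1 := by simp

lemma lintegral_enorm_deriv_smoothTransition_comp_le (N : ℕ) (a : ℝ) :
    ∫⁻ s, ‖deriv Real.smoothTransition ((a - s) * (N + 1))‖ₑ ≤ ‖(N : ℝ) + 1‖ₑ⁻¹ := by
  have hN : (0 : ℝ) < N + 1 := by positivity
  have hchange := lintegral_comp_smul_add volume
    ((Real.smoothTransition.contDiff (n := 1)).continuous_deriv le_rfl).enorm.measurable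
    (neg_ne_zero.2 hN.ne') (a * (N + 1))
  have harg (s : ℝ) : (a - s) * (N + 1) = -((N : ℝ) + 1) • s + a * (N + 1) := by
    rw [smul_eq_mul]
    ring
  simp only [harg, hchange]
  rw [Module.finrank_self, pow_one, abs_inv, abs_neg, abs_of_pos hN, ENNReal.ofReal_inv_of_pos hN,
    ← Real.enorm_of_nonneg hN.le]
  exact mul_le_of_le_one_right' lintegral_enorm_deriv_smoothTransition_le

lemma measure_sdiff_mul_setLIntegral_enorm_le {α F : Type*} [MeasurableSpace α] {μ : Measure α}
    [NormedAddCommGroup F] {w : α → F} {S A : Set α} (hS : MeasurableSet S) (hA : MeasurableSet A)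
    (hw : ∀ x ∉ A, w x = 0) :
    μ (S \ A) * ∫⁻ y in S ∩ A, ‖w y‖ₑ ∂μ ≤ ∫⁻ x in S, ∫⁻ y in S, ‖w x - w y‖ₑ ∂μ ∂μ := by
  calc μ (S \ A) * ∫⁻ y in S ∩ A, ‖w y‖ₑ ∂μ
      = ∫⁻ x in S \ A, ∫⁻ y in S ∩ A, ‖w x - w y‖ₑ ∂μ ∂μ := by
        rw [mul_comm, ← setLIntegral_const]
        exact setLIntegral_congr_fun (hS.diff hA) fun x hx => by simp [hw x hx.2]
    _ ≤ ∫⁻ x in S \ A, ∫⁻ y in S, ‖w x - w y‖ₑ ∂μ ∂μ :=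
        lintegral_mono fun x => lintegral_mono_set inter_subset_left
    _ ≤ ∫⁻ x in S, ∫⁻ y in S, ‖w x - w y‖ₑ ∂μ ∂μ := lintegral_mono_set sdiff_subset

variable {E : Type*}

/-- A smooth approximation, increasing in `N`, of the indicator function of `{x | s < g x}`. -/
noncomputable def smoothSuperlevel (g : E → ℝ) (N : ℕ) (s : ℝ) (x : E) : ℝ :=
  Real.smoothTransition ((g x - s) * (N + 1))

lemma smoothSuperlevel_of_le {g : E → ℝ} {s : ℝ} {x : E} (h : g x ≤ s) (N : ℕ) :
    smoothSuperlevel g N s x = 0 :=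
  Real.smoothTransition.zero_of_nonpos
    (mul_nonpos_of_nonpos_of_nonneg (sub_nonpos.2 h) (by positivity))

lemma eventually_smoothSuperlevel_of_lt {g : E → ℝ} {s : ℝ} {x : E} (h : s < g x) :
    ∀ᶠ N in atTop, smoothSuperlevel g N s x = 1 := by
  have hlim : Tendsto (fun N : ℕ => (g x - s) * ((N : ℝ) + 1)) atTop atTop :=
    (tendsto_atTop_add_const_right _ _ tendsto_natCast_atTop_atTop).const_mul_atTop (sub_pos.2 h)
  filter_upwards [hlim.eventually_ge_atTop 1] with N hN
  exact Real.smoothTransition.one_of_one_le hN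

variable [NormedAddCommGroup E] [NormedSpace ℝ E] {g : E → ℝ}

lemma contDiff_smoothSuperlevel (hg : ContDiff ℝ 1 g) (N : ℕ) (s : ℝ) :
    ContDiff ℝ 1 (smoothSuperlevel g N s) :=
  Real.smoothTransition.contDiff.comp ((hg.sub contDiff_const).mul contDiff_const)

lemma enorm_fderiv_smoothSuperlevel (hg : ContDiff ℝ 1 g) (N : ℕ) (s : ℝ) (x : E) :
    ‖fderiv ℝ (smoothSuperlevel g N s) x‖ₑ =
      ‖deriv Real.smoothTransition ((g x - s) * (N + 1))‖ₑ * ‖(N : ℝ) + 1‖ₑ * ‖fderiv ℝ g x‖ₑ := by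
  have hderiv : HasFDerivAt (smoothSuperlevel g N s) _ x :=
    ((Real.smoothTransition.contDiff (n := 1)).differentiable one_ne_zero
      _).hasDerivAt.comp_hasFDerivAt x
      (((hg.differentiable one_ne_zero x).hasFDerivAt.sub_const s).mul_const ((N : ℝ) + 1))
  rw [hderiv.fderiv, enorm_smul, enorm_smul, mul_assoc]

lemma lintegral_enorm_fderiv_smoothSuperlevel_le (hg : ContDiff ℝ 1 g) (N : ℕ) (x : E) :
    ∫⁻ s, ‖fderiv ℝ (smoothSuperlevel g N s) x‖ₑ ≤ ‖fderiv ℝ g x‖ₑ := by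
  have hN : ‖(N : ℝ) + 1‖ₑ ≠ 0 := enorm_ne_zero.2 (by positivity)
  simp only [enorm_fderiv_smoothSuperlevel hg, mul_assoc]
  rw [lintegral_mul_const' _ _ (by finiteness)]
  calc (∫⁻ s, ‖deriv Real.smoothTransition ((g x - s) * (N + 1))‖ₑ) *
        (‖(N : ℝ) + 1‖ₑ * ‖fderiv ℝ g x‖ₑ)
      ≤ ‖(N : ℝ) + 1‖ₑ⁻¹ * (‖(N : ℝ) + 1‖ₑ * ‖fderiv ℝ g x‖ₑ) := by
        gcongr
        exact lintegral_enorm_deriv_smoothTransition_comp_le N (g x)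
    _ = ‖fderiv ℝ g x‖ₑ := by
        rw [← mul_assoc, ENNReal.inv_mul_cancel hN enorm_ne_top, one_mul]

variable [MeasurableSpace E] {μ : Measure E}

/-- The perimeter of `{x | s < g x}` inside `A`, encoded as the lower limit of the total variations
of smooth approximations of its indicator function. -/
noncomputable def superlevelPerimeter (μ : Measure E) (g : E → ℝ) (s : ℝ) (A : Set E) : ℝ≥0∞ :=
  liminf (fun N => ∫⁻ x in A, ‖fderiv ℝ (smoothSuperlevel g N s) x‖ₑ ∂μ) atTop

lemma superlevelPerimeter_mono {s : ℝ} {A B : Set E} (h : A ⊆ B) :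
    superlevelPerimeter μ g s A ≤ superlevelPerimeter μ g s B :=
  liminf_le_liminf (.of_forall fun _ => lintegral_mono_set h)

lemma tsum_liminf_le_liminf_tsum {ι : Type*} (a : ℕ → ι → ℝ≥0∞) :
    ∑' i, liminf (fun N => a N i) atTop ≤ liminf (fun N => ∑' i, a N i) atTop := by
  let _ : MeasurableSpace ι := ⊤
  simp only [← lintegral_count]
  exact lintegral_liminf_le fun N => measurable_from_top

lemma tsum_superlevelPerimeter_le {ι : Type*} [Countable ι] {A : ι → Set E}
    (hA : ∀ i, MeasurableSet (A i)) (hdisj : Pairwise (Function.onFun Disjoint A)) (s : ℝ) :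
    ∑' i, superlevelPerimeter μ g s (A i) ≤ superlevelPerimeter μ g s (⋃ i, A i) := by
  refine (tsum_liminf_le_liminf_tsum _).trans_eq ?_
  simp only [superlevelPerimeter, lintegral_iUnion hA hdisj]

section Coarea

variable [OpensMeasurableSpace E]

lemma measurable_enorm_fderiv_smoothSuperlevel (hg : ContDiff ℝ 1 g) (N : ℕ) :
    Measurable fun p : ℝ × E => ‖fderiv ℝ (smoothSuperlevel g N p.1) p.2‖ₑ := by
  simp only [enorm_fderiv_smoothSuperlevel hg]
  have hderiv : Continuous (deriv Real.smoothTransition) :=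
    (Real.smoothTransition.contDiff (n := 1)).continuous_deriv le_rfl
  have harg : Continuous fun p : ℝ × E => (g p.2 - p.1) * ((N : ℝ) + 1) :=
    ((hg.continuous.comp continuous_snd).sub continuous_fst).mul continuous_const
  exact ((hderiv.comp harg).enorm.measurable.mul_const _).mul
    ((hg.continuous_fderiv one_ne_zero).comp continuous_snd).enorm.measurable

variable [SFinite μ]

lemma measurable_superlevelPerimeter_univ (hg : ContDiff ℝ 1 g) :
    Measurable fun s => superlevelPerimeter μ g s univ := by
  simp only [superlevelPerimeter, Measure.restrict_univ]
  exact .liminf fun N => (measurable_enorm_fderiv_smoothSuperlevel hg N).lintegral_prod_right'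

lemma lintegral_superlevelPerimeter_univ_le (hg : ContDiff ℝ 1 g) :
    ∫⁻ s, superlevelPerimeter μ g s univ ≤ ∫⁻ x, ‖fderiv ℝ g x‖ₑ ∂μ := by
  simp only [superlevelPerimeter, Measure.restrict_univ]
  have hmeas := measurable_enorm_fderiv_smoothSuperlevel hg
  refine (lintegral_liminf_le fun N => (hmeas N).lintegral_prod_right').trans ?_
  rw [← liminf_const (f := atTop (α := ℕ)) (∫⁻ x, ‖fderiv ℝ g x‖ₑ ∂μ)]
  refine liminf_le_liminf (.of_forall fun N => ?_)
  rw [lintegral_lintegral_swap (hmeas N).aemeasurable]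
  exact lintegral_mono fun x => lintegral_enorm_fderiv_smoothSuperlevel_le hg N x

end Coarea

lemma measure_le_liminf_setLIntegral_smoothSuperlevel [OpensMeasurableSpace E]
    (hg : ContDiff ℝ 1 g) (s : ℝ) {S : Set E} (hS : MeasurableSet S)
    (hSg : ∀ x ∈ S, s < g x) :
    μ S ≤ liminf (fun N => ∫⁻ x in S, ‖smoothSuperlevel g N s x‖ₑ ∂μ) atTop := by
  have hlim (x : E) (hx : x ∈ S) :
      Tendsto (fun N => ‖smoothSuperlevel g N s x‖ₑ) atTop (𝓝 1) := by
    refine tendsto_const_nhds.congr' ?_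
    filter_upwards [eventually_smoothSuperlevel_of_lt (hSg x hx)] with N hN
    simp [hN]
  calc μ S = ∫⁻ x in S, liminf (fun N => ‖smoothSuperlevel g N s x‖ₑ) atTop ∂μ := by
        rw [setLIntegral_congr_fun hS fun x hx => (hlim x hx).liminf_eq, setLIntegral_one]
    _ ≤ _ := lintegral_liminf_le fun N =>
        (contDiff_smoothSuperlevel hg N s).continuous.enorm.measurable

/-- The relative isoperimetric inequality is the Poincaré inequality for indicator functions. -/
theorem measure_sdiff_mul_measure_inter_le [FiniteDimensional ℝ E] [BorelSpace E]
    (μ : Measure E) [μ.IsAddHaarMeasure] (hg : ContDiff ℝ 1 g) (s : ℝ) {S : Set E}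
    (hS : Convex ℝ S) (hSm : MeasurableSet S) (hSb : Bornology.IsBounded S) :
    μ (S \ {x | s < g x}) * μ (S ∩ {x | s < g x}) ≤
      ediam S * 2 ^ Module.finrank ℝ E * μ S * superlevelPerimeter μ g s S := by
  have := FiniteDimensional.proper ℝ E
  have hA : MeasurableSet {x | s < g x} :=
    measurableSet_lt measurable_const hg.continuous.measurable
  have hμS : μ S ≠ ⊤ := hSb.measure_lt_top.ne
  have hdiam : ediam S ≠ ⊤ := isBounded_iff_ediam_ne_top.1 hSb
  calc μ (S \ {x | s < g x}) * μ (S ∩ {x | s < g x})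
      ≤ μ (S \ {x | s < g x}) *
          liminf (fun N => ∫⁻ x in S ∩ {x | s < g x}, ‖smoothSuperlevel g N s x‖ₑ ∂μ) atTop := by
        gcongr
        exact measure_le_liminf_setLIntegral_smoothSuperlevel hg s (hSm.inter hA) fun x hx => hx.2
    _ = liminf (fun N => μ (S \ {x | s < g x}) *
          ∫⁻ x in S ∩ {x | s < g x}, ‖smoothSuperlevel g N s x‖ₑ ∂μ) atTop :=
        (ENNReal.liminf_const_mul_of_ne_top (measure_ne_top_of_subset sdiff_subset hμS)).symm
    _ ≤ liminf (fun N => ediam S * 2 ^ Module.finrank ℝ E * μ S *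
          ∫⁻ x in S, ‖fderiv ℝ (smoothSuperlevel g N s) x‖ₑ ∂μ) atTop := by
        refine liminf_le_liminf (.of_forall fun N => ?_)
        refine (measure_sdiff_mul_setLIntegral_enorm_le hSm hA fun x hx =>
          smoothSuperlevel_of_le (not_lt.1 hx) N).trans ?_
        refine (setLIntegral_setLIntegral_enorm_sub_le μ (contDiff_smoothSuperlevel hg N s) hS
          hSm).trans_eq ?_
        ring
    _ = _ := ENNReal.liminf_const_mul_of_ne_top (by finiteness)

end SuperlevelPerimeter

section Boxing

open Filter Topology

variable {n : ℕ} {E : Set (EuclideanSpace ℝ (Fin n))}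

namespace DyadicCube

/-- `Q` is balanced with respect to `E` if `E` fills at most half, but a definite part, of `Q`. The
constant is chosen so that the parent of a cube more than half full is balanced or more than half
full. -/
def IsBalanced (E : Set (EuclideanSpace ℝ (Fin n))) (Q : DyadicCube n) : Prop :=
  volume Q.toSet ≤ 2 ^ (n + 1) * volume (Q.toSet ∩ E) ∧ 2 * volume (Q.toSet ∩ E) ≤ volume Q.toSet

/-- `Q` is balanced and no larger dyadic cube meeting `Q` is. -/
def IsMaximalBalanced (E : Set (EuclideanSpace ℝ (Fin n))) (Q : DyadicCube n) : Prop :=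
  Q.IsBalanced E ∧
    ∀ R : DyadicCube n, R.IsBalanced E → (Q.toSet ∩ R.toSet).Nonempty → R.scale ≤ Q.scale

lemma IsMaximalBalanced.disjoint {Q R : DyadicCube n} (hQ : Q.IsMaximalBalanced E)
    (hR : R.IsMaximalBalanced E) (hQR : Q ≠ R) : Disjoint Q.toSet R.toSet := by
  refine disjoint_left.2 fun x hxQ hxR => hQR ?_
  have hscale : Q.scale = R.scale :=
    le_antisymm (hR.2 Q hQ.1 ⟨x, hxR, hxQ⟩) (hQ.2 R hR.1 ⟨x, hxQ, hxR⟩)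
  rw [← containing_eq_of_mem hxQ, ← containing_eq_of_mem hxR, hscale]

lemma eventually_mul_volume_lt_volume_containing (hn : 0 < n) (hE : volume E ≠ ⊤) {a : ℝ≥0∞}
    (ha : a ≠ ⊤) (x : EuclideanSpace ℝ (Fin n)) :
    ∀ᶠ j in atTop, a * volume ((containing j x).toSet ∩ E) < volume (containing j x).toSet := by
  filter_upwards [(tendsto_inv_dyadicLength_pow_mul_atTop hn
    (ENNReal.mul_ne_top ha hE)).eventually_lt_const one_pos] with j hj
  rw [volume_toSet]
  calc a * volume ((containing j x).toSet ∩ E) ≤ a * volume E := by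
        gcongr
        exact inter_subset_right
    _ < dyadicLength j ^ n := by
        rwa [mul_comm, ← div_eq_mul_inv, ENNReal.div_lt_iff (.inl (dyadicLength_pow_ne_zero j n))
          (.inl (dyadicLength_pow_ne_top j n)), one_mul] at hj

lemma eventually_containing_subset (hE : IsOpen E) {x : EuclideanSpace ℝ (Fin n)} (hx : x ∈ E) :
    ∀ᶠ j in atBot, (containing j x).toSet ⊆ E := by
  obtain ⟨δ, hδ, hball⟩ := EMetric.isOpen_iff.1 hE x hx
  have hsmall := (tendsto_mul_dyadicLength_atBot (ENNReal.natCast_ne_top n)).eventually_lt_const hδ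
  filter_upwards [hsmall] with j hj y hy
  exact hball ((edist_le_of_mem hy (mem_toSet_containing j x)).trans_lt hj)

lemma exists_isBalanced_containing (hn : 0 < n) (hE : IsOpen E) (hE_top : volume E ≠ ⊤)
    {x : EuclideanSpace ℝ (Fin n)} (hx : x ∈ E) : ∃ j, (containing j x).IsBalanced E := by
  obtain ⟨a, ha⟩ := eventually_atBot.1 (eventually_containing_subset hE hx)
  have hsmall (j : ℤ) (hj : 2 * volume ((containing j x).toSet ∩ E) ≤
      volume (containing j x).toSet) : a ≤ j := by
    by_contra! hja
    rw [inter_eq_left.2 (ha j hja.le), two_mul] at hj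
    exact hj.not_gt (ENNReal.lt_add_right (volume_toSet_ne_top _) (volume_toSet_ne_zero _))
  obtain ⟨b, hb⟩ := (eventually_mul_volume_lt_volume_containing (a := 2) hn hE_top
    (by finiteness) x).exists
  obtain ⟨j, hj, hj_least⟩ := Int.exists_least_of_bdd ⟨a, hsmall⟩ ⟨b, hb.le⟩
  have hpred : volume (containing (j - 1) x).toSet <
      2 * volume ((containing (j - 1) x).toSet ∩ E) := by
    by_contra! h
    linarith [hj_least (j - 1) h]
  refine ⟨j, ?_, hj⟩
  calc volume (containing j x).toSet = 2 ^ n * volume (containing (j - 1) x).toSet := by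
        rw [volume_toSet, volume_toSet, containing, containing, ← dyadicLength_add_one_pow,
          sub_add_cancel]
    _ ≤ 2 ^ n * (2 * volume ((containing j x).toSet ∩ E)) := by
        gcongr
        refine hpred.le.trans ?_
        gcongr 2 * volume (?_ ∩ E)
        exact monotone_toSet_containing x (by simp)
    _ = 2 ^ (n + 1) * volume ((containing j x).toSet ∩ E) := by ring

lemma exists_isMaximalBalanced_containing (hn : 0 < n) (hE : IsOpen E) (hE_top : volume E ≠ ⊤)
    {x : EuclideanSpace ℝ (Fin n)} (hx : x ∈ E) : ∃ j, (containing j x).IsMaximalBalanced E := by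
  have hbdd : ∃ b, ∀ j, (containing j x).IsBalanced E → j ≤ b := by
    obtain ⟨b, hb⟩ := eventually_atTop.1 (eventually_mul_volume_lt_volume_containing
      (a := 2 ^ (n + 1)) hn hE_top (by finiteness) x)
    exact ⟨b, fun j hj => not_lt.1 fun hbj => hj.1.not_gt (hb j hbj.le)⟩
  obtain ⟨j, hj, hj_greatest⟩ :=
    Int.exists_greatest_of_bdd hbdd (exists_isBalanced_containing hn hE hE_top hx)
  refine ⟨j, hj, fun R hR ⟨y, hyx, hyR⟩ => not_lt.1 fun hjR => ?_⟩
  have hxR : x ∈ R.toSet := by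
    have h : (containing (containing j x).scale y).toSet ⊆ (containing R.scale y).toSet :=
      monotone_toSet_containing y hjR.le
    rw [containing_eq_of_mem hyR, containing_eq_of_mem hyx] at h
    exact h (mem_toSet_containing j x)
  exact hjR.not_ge (hj_greatest _ (containing_eq_of_mem hxR ▸ hR))

end DyadicCube

/-- The constant in the isoperimetric inequality for balanced cubes of dimension `d + 1`. -/
noncomputable def boxingConstant (d : ℕ) : ℝ≥0∞ := 2 ^ (d + 3) * ((d + 1 : ℕ) * 2 ^ (d + 1))

lemma boxingConstant_ne_top (d : ℕ) : boxingConstant d ≠ ⊤ := by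
  unfold boxingConstant
  finiteness

variable {d : ℕ} {g : EuclideanSpace ℝ (Fin (d + 1)) → ℝ}

lemma DyadicCube.IsBalanced.dyadicLength_pow_le (hg : ContDiff ℝ 1 g) {s : ℝ}
    {Q : DyadicCube (d + 1)} (hQ : Q.IsBalanced {x | s < g x}) :
    dyadicLength Q.scale ^ d ≤ boxingConstant d * superlevelPerimeter volume g s Q.toSet := by
  set E := {x | s < g x}
  set L := dyadicLength Q.scale
  set P := superlevelPerimeter volume g s Q.toSet
  have hE : MeasurableSet E := measurableSet_lt measurable_const hg.continuous.measurable
  have hvol : volume Q.toSet = L ^ (d + 1) := Q.volume_toSet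
  have hsdiff : volume Q.toSet ≤ 2 * volume (Q.toSet \ E) := by
    have hsplit := measure_inter_add_sdiff (μ := volume) Q.toSet hE
    have hinter : volume (Q.toSet ∩ E) ≤ volume (Q.toSet \ E) := by
      have h := hQ.2
      rw [← hsplit, two_mul] at h
      exact (ENNReal.add_le_add_iff_left
        (measure_ne_top_of_subset inter_subset_left Q.volume_toSet_ne_top)).1 h
    rw [← hsplit, two_mul]
    gcongr
  have hiso : volume (Q.toSet \ E) * volume (Q.toSet ∩ E) ≤
      (d + 1 : ℕ) * L * 2 ^ (d + 1) * L ^ (d + 1) * P := by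
    have h := measure_sdiff_mul_measure_inter_le volume hg s Q.convex_toSet Q.measurableSet_toSet
      Q.isBounded_toSet
    rw [finrank_euclideanSpace_fin, hvol] at h
    refine h.trans ?_
    gcongr
    exact Q.ediam_toSet_le
  have hsq : L ^ (d + 1) * L * L ^ d ≤ L ^ (d + 1) * L * (boxingConstant d * P) := by
    calc L ^ (d + 1) * L * L ^ d = volume Q.toSet * volume Q.toSet := by rw [hvol]; ring
      _ ≤ 2 * volume (Q.toSet \ E) * (2 ^ (d + 1 + 1) * volume (Q.toSet ∩ E)) := by
          gcongr
          exact hQ.1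
      _ = 2 ^ (d + 3) * (volume (Q.toSet \ E) * volume (Q.toSet ∩ E)) := by ring
      _ ≤ 2 ^ (d + 3) * ((d + 1 : ℕ) * L * 2 ^ (d + 1) * L ^ (d + 1) * P) := by gcongr
      _ = L ^ (d + 1) * L * (boxingConstant d * P) := by unfold boxingConstant; ring
  refine (ENNReal.mul_le_mul_iff_right ?_ ?_).1 hsq
  · exact mul_ne_zero (dyadicLength_pow_ne_zero _ _) (dyadicLength_ne_zero _)
  · exact ENNReal.mul_ne_top (dyadicLength_pow_ne_top _ _) (dyadicLength_ne_top _)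

lemma exists_mem_Ioc_zpow_dyadicLength_mul_le {P : ℝ → ℝ≥0∞} (hP : Measurable P) (i : ℤ) :
    ∃ s ∈ Ioc ((2 : ℝ) ^ (i - 1)) (2 ^ i),
      dyadicLength (i + 1) * P s ≤ 4 * ∫⁻ s in Ioc ((2 : ℝ) ^ (i - 1)) (2 ^ i), P s := by
  have hvol : volume (Ioc ((2 : ℝ) ^ (i - 1)) (2 ^ i)) = dyadicLength (i - 1) := by
    rw [Real.volume_Ioc, dyadicLength_eq_ofReal, zpow_sub_one₀ two_ne_zero]
    ring_nf
  have hlen : dyadicLength (i + 1) = 4 * dyadicLength (i - 1) := by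
    rw [dyadicLength_add_one, ← sub_add_cancel i 1, dyadicLength_add_one, sub_add_cancel,
      ← mul_assoc]
    norm_num
  obtain ⟨s, hs, hle⟩ := exists_le_setLAverage (hvol ▸ dyadicLength_ne_zero _)
    (hvol ▸ dyadicLength_ne_top _) hP.aemeasurable
  refine ⟨s, hs, ?_⟩
  rw [setLAverage_eq, hvol, ENNReal.le_div_iff_mul_le (.inl (dyadicLength_ne_zero _))
    (.inl (dyadicLength_ne_top _)), mul_comm] at hle
  rw [hlen, mul_assoc]
  exact mul_le_mul_right hle 4

namespace HasDyadicMajorant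

lemma indicator_superlevel (hg : ContDiff ℝ 1 g) (hi : Integrable g) {s : ℝ} (hs : 0 < s) :
    HasDyadicMajorant d ({x | s < g x}.indicator 1)
      (boxingConstant d * superlevelPerimeter volume g s univ) := by
  set E := {x | s < g x}
  have hE : IsOpen E := isOpen_lt continuous_const hg.continuous
  have hE_top : volume E ≠ ⊤ := (hi.measure_gt_lt_top hs).ne
  let G := {Q : DyadicCube (d + 1) // Q.IsMaximalBalanced E}
  refine (HasDyadicMajorant.tsum fun Q : G => indicator_toSet d Q.1).mono
    (indicator_le fun x hx => ?_) ?_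
  · obtain ⟨j, hj⟩ := DyadicCube.exists_isMaximalBalanced_containing d.succ_pos hE hE_top hx
    calc (1 : ℝ≥0∞) = (DyadicCube.containing j x).toSet.indicator 1 x := by
          simp [DyadicCube.mem_toSet_containing]
      _ ≤ ∑' Q : G, Q.1.toSet.indicator 1 x :=
          ENNReal.le_tsum (f := fun Q : G => Q.1.toSet.indicator 1 x) ⟨_, hj⟩
  · calc ∑' Q : G, dyadicLength Q.1.scale ^ d
        ≤ ∑' Q : G, boxingConstant d * superlevelPerimeter volume g s Q.1.toSet :=
          ENNReal.tsum_le_tsum fun Q => Q.2.1.dyadicLength_pow_le hg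
      _ = boxingConstant d * ∑' Q : G, superlevelPerimeter volume g s Q.1.toSet :=
          ENNReal.tsum_mul_left
      _ ≤ boxingConstant d * superlevelPerimeter volume g s (⋃ Q : G, Q.1.toSet) := by
          gcongr
          exact tsum_superlevelPerimeter_le (fun Q => Q.1.measurableSet_toSet)
            (fun Q R hQR => Q.2.disjoint R.2 (Subtype.coe_ne_coe.2 hQR)) s
      _ ≤ _ := by
          gcongr
          exact superlevelPerimeter_mono (subset_univ _)

/-- A level is selected in each dyadic shell `(2 ^ (i - 1), 2 ^ i]` by the mean value principle, and
`g ≤ ∑ i, 2 ^ (i + 1) • 1_{s i < g}`. -/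
lemma ofReal_of_indicator_superlevel {g : EuclideanSpace ℝ (Fin n) → ℝ} {P : ℝ → ℝ≥0∞}
    (hP : Measurable P)
    (H : ∀ s, 0 < s → HasDyadicMajorant d ({x | s < g x}.indicator 1) (P s)) :
    HasDyadicMajorant d (fun x => ENNReal.ofReal (g x)) (4 * ∫⁻ s, P s) := by
  choose s hs hsP using exists_mem_Ioc_zpow_dyadicLength_mul_le hP
  have hs_pos (i : ℤ) : 0 < s i := lt_trans (by positivity) (hs i).1
  refine (HasDyadicMajorant.tsum fun i : ℤ =>
    (H (s i) (hs_pos i)).const_mul (dyadicLength (i + 1))).mono (fun x => ?_) ?_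
  · rcases le_or_gt (g x) 0 with hx | hx
    · simp [ENNReal.ofReal_of_nonpos hx]
    obtain ⟨i, hi_lt, hi_le⟩ := exists_mem_Ioc_zpow hx one_lt_two
    refine le_trans ?_ (ENNReal.le_tsum i)
    have hmem : x ∈ {x | s i < g x} := (hs i).2.trans_lt hi_lt
    rw [indicator_of_mem hmem, Pi.one_apply, mul_one, dyadicLength_eq_ofReal]
    exact ENNReal.ofReal_le_ofReal hi_le
  · have hdisj : Pairwise (Function.onFun Disjoint fun i : ℤ => Ioc ((2 : ℝ) ^ (i - 1)) (2 ^ i)) :=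
      (zpow_right_mono₀ one_le_two).pairwise_disjoint_on_Ioc_pred
    calc ∑' i, dyadicLength (i + 1) * P (s i)
        ≤ ∑' i : ℤ, 4 * ∫⁻ s in Ioc ((2 : ℝ) ^ (i - 1)) (2 ^ i), P s := ENNReal.tsum_le_tsum hsP
      _ = 4 * ∫⁻ s in ⋃ i : ℤ, Ioc ((2 : ℝ) ^ (i - 1)) (2 ^ i), P s := by
          rw [ENNReal.tsum_mul_left, lintegral_iUnion (fun _ => measurableSet_Ioc) hdisj]
      _ ≤ 4 * ∫⁻ s, P s := by
          gcongr
          exact Measure.restrict_le_self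

lemma ofReal_of_integrable (hg : ContDiff ℝ 1 g) (hi : Integrable g) :
    HasDyadicMajorant d (fun x => ENNReal.ofReal (g x))
      (4 * boxingConstant d * ∫⁻ x, ‖fderiv ℝ g x‖ₑ) := by
  have hmeas := measurable_superlevelPerimeter_univ (μ := volume) hg
  refine (ofReal_of_indicator_superlevel (hmeas.const_mul _)
    fun s hs => indicator_superlevel hg hi hs).mono (fun _ => le_rfl) ?_
  rw [lintegral_const_mul _ hmeas, mul_assoc]
  gcongr
  exact lintegral_superlevelPerimeter_univ_le hg

theorem enorm_of_integrable (hg : ContDiff ℝ 1 g) (hi : Integrable g) :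
    HasDyadicMajorant d (fun x => ‖g x‖ₑ) (8 * boxingConstant d * ∫⁻ x, ‖fderiv ℝ g x‖ₑ) := by
  refine ((ofReal_of_integrable hg hi).add (ofReal_of_integrable hg.neg hi.neg)).mono
    (fun x => ?_) ?_
  · rcases le_total 0 (g x) with h | h
    · exact (Real.enorm_of_nonneg h).trans_le le_self_add
    · exact (enorm_neg (g x) ▸ Real.enorm_of_nonneg (neg_nonneg.2 h)).trans_le le_add_self
  · simp only [fderiv_fun_neg, enorm_neg]
    apply le_of_eq
    ring

end HasDyadicMajorant

end Boxing

section HigherDerivatives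

variable {F : Type*} [NormedAddCommGroup F] [NormedSpace ℝ F]

lemma enorm_fderiv_iteratedFDeriv {E : Type*} [NormedAddCommGroup E] [NormedSpace ℝ E]
    (i : ℕ) (f : E → F) (x : E) :
    ‖fderiv ℝ (iteratedFDeriv ℝ i f) x‖ₑ = ‖iteratedFDeriv ℝ (i + 1) f x‖ₑ := by
  rw [← ofReal_norm, norm_fderiv_iteratedFDeriv, ofReal_norm]

lemma integrable_iteratedFDeriv_of_norm {n i : ℕ} {k : WithTop ℕ∞}
    {f : EuclideanSpace ℝ (Fin n) → F} (hf : ContDiff ℝ k f) (hik : i ≤ k)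
    (hi : Integrable fun x => ‖iteratedFDeriv ℝ i f x‖) : Integrable (iteratedFDeriv ℝ i f) :=
  (integrable_norm_iff (hf.continuous_iteratedFDeriv hik).aestronglyMeasurable).1 hi

instance finiteDimensional_continuousMultilinearMap {E : Type*} [NormedAddCommGroup E]
    [NormedSpace ℝ E] [FiniteDimensional ℝ E] [FiniteDimensional ℝ F] (i : ℕ) :
    FiniteDimensional ℝ (E [×i]→L[ℝ] F) :=
  .of_injective ContinuousMultilinearMap.toMultilinearMapLinear
    ContinuousMultilinearMap.toMultilinearMap_injective

variable (F) [FiniteDimensional ℝ F]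

namespace HasDyadicMajorant

theorem exists_enorm_of_integrable (d : ℕ) :
    ∃ C : ℝ≥0∞, C ≠ ⊤ ∧ ∀ u : EuclideanSpace ℝ (Fin (d + 1)) → F, ContDiff ℝ 1 u → Integrable u →
      HasDyadicMajorant d (fun x => ‖u x‖ₑ) (C * ∫⁻ x, ‖fderiv ℝ u x‖ₑ) := by
  let b := Module.finBasis ℝ F
  let coord i := (b.coord i).toContinuousLinearMap
  refine ⟨∑ i, ‖b i‖ₑ * (8 * boxingConstant d * ‖coord i‖ₑ), ?_, fun u hu hi => ?_⟩
  · have := boxingConstant_ne_top d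
    exact ENNReal.sum_ne_top.2 fun _ _ => by finiteness
  have hcoord i : HasDyadicMajorant d (fun x => ‖coord i (u x)‖ₑ)
      (8 * boxingConstant d * (‖coord i‖ₑ * ∫⁻ x, ‖fderiv ℝ u x‖ₑ)) := by
    refine (enorm_of_integrable ((coord i).contDiff.comp hu) ((coord i).integrable_comp hi)).mono
      (fun _ => le_rfl) ?_
    rw [← lintegral_const_mul' _ _ enorm_ne_top]
    gcongr with x
    rw [fderiv_comp x (coord i).differentiableAt (hu.differentiable one_ne_zero x),
      ContinuousLinearMap.fderiv]
    exact ContinuousLinearMap.opENorm_comp_le _ _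
  refine (HasDyadicMajorant.sum fun i => (hcoord i).const_mul ‖b i‖ₑ).mono (fun x => ?_) ?_
  · calc ‖u x‖ₑ = ‖∑ i, coord i (u x) • b i‖ₑ := congrArg _ (b.sum_repr (u x)).symm
      _ ≤ ∑ i, ‖coord i (u x) • b i‖ₑ := enorm_sum_le _ _
      _ = ∑ i, ‖b i‖ₑ * ‖coord i (u x)‖ₑ := by simp only [enorm_smul, mul_comm]
  · rw [Finset.sum_mul]
    exact Finset.sum_le_sum fun i _ => le_of_eq (by ring)

theorem exists_enorm_iteratedFDeriv {n d m : ℕ} (hn : d + m + 1 = n) (l : ℕ) :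
    ∃ C : ℝ≥0∞, C ≠ ⊤ ∧ ∀ f : EuclideanSpace ℝ (Fin n) → F, ContDiff ℝ (l + m + 1 : ℕ) f →
      (∀ i, l ≤ i → i ≤ l + m → Integrable (iteratedFDeriv ℝ i f)) →
      HasDyadicMajorant d (fun x => ‖iteratedFDeriv ℝ l f x‖ₑ)
        (C * ∫⁻ x, ‖iteratedFDeriv ℝ (l + m + 1) f x‖ₑ) := by
  induction m generalizing d l with
  | zero =>
    subst hn
    obtain ⟨C, hC, H⟩ :=
      exists_enorm_of_integrable (EuclideanSpace ℝ (Fin (d + 1)) [×l]→L[ℝ] F) d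
    refine ⟨C, hC, fun f hf hi => ?_⟩
    simp only [← enorm_fderiv_iteratedFDeriv]
    refine H _ (hf.iteratedFDeriv_right ?_) (hi l le_rfl le_rfl)
    norm_cast
    lia
  | succ m ih =>
    obtain ⟨C, hC, H⟩ := ih (d := d + 1) (by lia) (l + 1)
    refine ⟨n * 4 ^ n * (3 * C), by finiteness, fun f hf hi => ?_⟩
    rw [show l + (m + 1) + 1 = l + 1 + m + 1 by lia] at hf ⊢
    have hl : ContDiff ℝ 1 (iteratedFDeriv ℝ l f) := hf.iteratedFDeriv_right (by norm_cast; lia)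
    have hnext := H f hf fun i hli him => hi i (by lia) (by lia)
    refine ((hnext.dyadicRiesz (by lia)).const_mul (n * 4 ^ n)).mono (fun x => ?_)
      (le_of_eq (by ring))
    have h := enorm_le_dyadicRiesz (by lia) hl (hi l le_rfl (by lia)) x
    simpa only [enorm_fderiv_iteratedFDeriv] using h

end HasDyadicMajorant

theorem exists_lintegral_hContent_maxFn_iteratedFDeriv_le {n d m : ℕ} (hd : 0 < d)
    (hn : d + m + 1 = n) (l : ℕ) :
    ∃ C : ℝ≥0∞, C ≠ ⊤ ∧ ∀ f : EuclideanSpace ℝ (Fin n) → F, ContDiff ℝ (l + m + 1 : ℕ) f →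
      (∀ i, l ≤ i → i ≤ l + m + 1 → Integrable (iteratedFDeriv ℝ i f)) →
      ∫⁻ t in Ioi (0 : ℝ),
          hContent d {x | ENNReal.ofReal t ≤ maxFn (fun y => ‖iteratedFDeriv ℝ l f y‖ₑ) x}
        ≤ C * ∫⁻ x, ‖iteratedFDeriv ℝ (l + m + 1) f x‖ₑ := by
  obtain ⟨C, hC, H⟩ := HasDyadicMajorant.exists_enorm_iteratedFDeriv F hn l
  have hmaximal : maximalConstant n ≠ ⊤ := maximalConstant_ne_top
  refine ⟨n ^ d * (2 * (2 * 3 ^ n * maximalConstant n * C)), by finiteness, fun f hf hi => ?_⟩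
  have hmajorant := (H f hf fun i hli him => hi i hli (by lia)).maxFn (by lia)
  have hfinite := (hi (l + m + 1) (by lia) le_rfl).2.ne
  refine (hmajorant.lintegral_hContent_le hd (by finiteness)).trans_eq ?_
  ring

end HigherDerivatives

theorem adams_choquet_sobolev_general (F : Type*) [NormedAddCommGroup F] [NormedSpace ℝ F]
    [FiniteDimensional ℝ F] {n k l : ℕ} (hlk : l < k) (hkn : k < n + l) :
    ∃ C : ℝ, 0 < C ∧ ∀ f : EuclideanSpace ℝ (Fin n) → F, ContDiff ℝ k f →
      (∀ i, l ≤ i → i ≤ k → Integrable fun x => ‖iteratedFDeriv ℝ i f x‖) →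
      ∫⁻ t in Ioi (0 : ℝ),
          hContent ((n : ℝ) - k + l)
            {x | ENNReal.ofReal t ≤ maxFn (fun y => ‖iteratedFDeriv ℝ l f y‖ₑ) x}
        ≤ ENNReal.ofReal C * ENNReal.ofReal (∫ x, ‖iteratedFDeriv ℝ k f x‖) := by
  obtain ⟨m, rfl⟩ := Nat.exists_eq_add_of_lt hlk
  obtain ⟨d, rfl⟩ : ∃ d, n = d + m + 1 := ⟨n - m - 1, by lia⟩
  obtain ⟨C, hC, H⟩ :=
    exists_lintegral_hContent_maxFn_iteratedFDeriv_le F (show 0 < d by lia) rfl l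
  refine ⟨C.toReal + 1, by positivity, fun f hf hi => ?_⟩
  have hf_int (i : ℕ) (hli : l ≤ i) (hik : i ≤ l + m + 1) : Integrable (iteratedFDeriv ℝ i f) :=
    integrable_iteratedFDeriv_of_norm hf (mod_cast hik) (hi i hli hik)
  have hτ : ((d + m + 1 : ℕ) : ℝ) - (l + m + 1 : ℕ) + l = d := by push_cast; ring
  have hC_le : C ≤ ENNReal.ofReal (C.toReal + 1) :=
    ENNReal.le_ofReal_iff_toReal_le hC (by positivity) |>.2 (by simp)
  rw [ofReal_integral_norm_eq_lintegral_enorm (hf_int (l + m + 1) (by lia) le_rfl), hτ]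
  exact (H f hf hf_int).trans (mul_le_mul_left hC_le _)

/-- Adams' estimate for `W^{k,1}`: the Choquet integral with respect to `(n-k+l)`-dimensional
Hausdorff content of the maximal function of `∇^l f` is controlled by `‖∇^k f‖_{L¹}`. -/
theorem adams_choquet_sobolev {n k l : ℕ} (hl : 1 ≤ l) (hlk : l < k) (hkn : k ≤ n) :
    ∃ C : ℝ, 0 < C ∧ ∀ f : EuclideanSpace ℝ (Fin n) → ℝ,
      ContDiff ℝ k f →
      (∀ i ≤ k, Integrable fun x => ‖iteratedFDeriv ℝ i f x‖) →
      ∫⁻ t in Set.Ioi (0 : ℝ),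
          hContent ((n : ℝ) - k + l)
            {x | ENNReal.ofReal t ≤ maxFn (fun y => (‖iteratedFDeriv ℝ l f y‖₊ : ℝ≥0∞)) x}
        ≤ ENNReal.ofReal C * ENNReal.ofReal (∫ x, ‖iteratedFDeriv ℝ k f x‖) := by
  obtain ⟨C, hC, H⟩ := adams_choquet_sobolev_general ℝ hlk (show k < n + l by lia)
  exact ⟨C, hC, fun f hf hi => H f hf fun i _ => hi i⟩
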